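/- Fix s₂ = σ₂ + it₂ with σ₁ + σ₂ = 3/2 and s₂ not a singularity of ζ₂. Then ∫₂^T |ζ₂(σ₁ + it₁, s₂)|² dt₁ = |s₂ − 1|^{-2} T log T + O(T), where the path of integration avoids the singularities of ζ₂. -/

import Mathlib

open Complex Filter Asymptotics Real

/-- The singular set of the Euler double zeta function: `s₂ = 1` or
`s₁ + s₂ ∈ {2, 1, 0, -2, -4, -6, …}`. -/
def zeta2Sing (p : ℂ × ℂ) : Prop :=
  p.2 = 1 ∨ p.1 + p.2 = 2 ∨ p.1 + p.2 = 1 ∨ ∃ k : ℕ, p.1 + p.2 = -2 * (k : ℂ)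

/-!
Subtracting from each inner sum `∑_{n > m} n^{-s₂}` its integral `m^{1-s₂} / (s₂ - 1)` gives
`ζ₂(s₁, s₂) = ζ(s₁ + s₂ - 1) / (s₂ - 1) + ∑ m^{-s₁} R_m(s₂)`, where `R_m(s₂)` is nearly of size
`m^{-σ₂}`; this continues `ζ₂` to `Re (s₁ + s₂) > 1`. For `t₁ ∈ [T, 2T]` the approximate formula for
`ζ` lets one truncate both terms at `m ≤ T`: up to `O(T^{-1/4})`, `ζ₂` is the Dirichlet polynomial
`∑_{m ≤ T} a_m m^{-it₁}` with `a_m = m^{-σ₁} (ζ(s₂) - ∑_{n ≤ m} n^{-s₂})`. On the line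
`σ₁ + σ₂ = 3/2` the integral dominates, so `|a_m|² = |s₂ - 1|^{-2} / m + O(m^{-3/2})`, and the mean
value theorem for Dirichlet polynomials, which follows from Hilbert's inequality, gives
`T ∑_{m ≤ T} |a_m|² + O(T)` on each dyadic block.
-/

section ExponentialSums

open scoped ComplexConjugate

variable {ι : Type*} (S : Finset ι) (u : ι → ℂ) (ν : ι → ℝ)

theorem mul_exp_mul_conj_mul_exp (z w : ℂ) (x y t : ℝ) :
    z * cexp (x * t * I) * conj (w * cexp (y * t * I)) =
      z * conj w * cexp ((x - y) * t * I) := by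
  rw [map_mul, mul_mul_mul_comm, ← exp_conj, ← Complex.exp_add]
  simp only [map_mul, conj_ofReal, conj_I]
  ring_nf

theorem ofReal_norm_sq_sum_exp (t : ℝ) :
    ((‖∑ i ∈ S, u i * cexp (ν i * t * I)‖ ^ 2 : ℝ) : ℂ) =
      ∑ i ∈ S, ∑ j ∈ S, u i * conj (u j) * cexp ((ν i - ν j) * t * I) := by
  rw [← normSq_eq_norm_sq, ← mul_conj, map_sum, Finset.sum_mul_sum]
  simp only [mul_exp_mul_conj_mul_exp]

theorem integral_mul_norm_sq_sum_exp {g : ℝ → ℝ} (hg : Continuous g) (a b : ℝ) :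
    ((∫ t in a..b, g t * ‖∑ i ∈ S, u i * cexp (ν i * t * I)‖ ^ 2 : ℝ) : ℂ) =
      ∑ i ∈ S, ∑ j ∈ S, u i * conj (u j) *
        ∫ t in a..b, (g t : ℂ) * cexp ((ν i - ν j) * t * I) := by
  rw [← intervalIntegral.integral_ofReal]
  simp_rw [ofReal_mul, ofReal_norm_sq_sum_exp, Finset.mul_sum]
  rw [intervalIntegral.integral_finsetSum
    fun i _ ↦ Continuous.intervalIntegrable (by fun_prop) a b]
  refine Finset.sum_congr rfl fun i _ ↦ ?_
  rw [intervalIntegral.integral_finsetSum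
    fun j _ ↦ Continuous.intervalIntegrable (by fun_prop) a b]
  refine Finset.sum_congr rfl fun j _ ↦ ?_
  simp_rw [mul_left_comm (g _ : ℂ)]
  exact intervalIntegral.integral_const_mul ..

theorem integral_exp_mul_I (δ a b : ℝ) :
    ∫ t in a..b, cexp (δ * t * I) =
      (if δ = 0 then (b - a : ℂ) else 0) + (cexp (δ * b * I) - cexp (δ * a * I)) / (δ * I) := by
  split_ifs with hδ
  · simp [hδ]
  · have hδI : (δ * I : ℂ) ≠ 0 := mul_ne_zero (ofReal_ne_zero.2 hδ) I_ne_zero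
    simpa only [zero_add, mul_right_comm] using integral_exp_mul_complex (a := a) (b := b) hδI

/-- A bound `H` for the bilinear forms with kernel `1 / (ν i - ν j)`, whose diagonal terms vanish
by the convention `x / 0 = 0`, yields a mean value theorem. -/
theorem abs_integral_norm_sq_sum_exp_sub_le {H : ℝ} (hν : Set.InjOn ν S)
    (hH : ∀ v : ι → ℂ, (∀ i, ‖v i‖ = ‖u i‖) →
      ‖∑ i ∈ S, ∑ j ∈ S, v i * conj (v j) / (ν i - ν j)‖ ≤ H) (a b : ℝ) :
    |(∫ t in a..b, ‖∑ i ∈ S, u i * cexp (ν i * t * I)‖ ^ 2) - (b - a) * ∑ i ∈ S, ‖u i‖ ^ 2| ≤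
      2 * H := by
  set W : ℝ → ℂ := fun t ↦ ∑ i ∈ S, ∑ j ∈ S,
    (u i * cexp (ν i * t * I)) * conj (u j * cexp (ν j * t * I)) / (ν i - ν j) with hW
  have hWH (t : ℝ) : ‖W t‖ ≤ H := hH _ fun i ↦ by
    rw [norm_mul, ← ofReal_mul, norm_exp_ofReal_mul_I, mul_one]
  have hdiag : ((b - a : ℂ)) * ∑ i ∈ S, (‖u i‖ : ℂ) ^ 2 =
      ∑ i ∈ S, ∑ j ∈ S, u i * conj (u j) * (if ν i - ν j = 0 then (b - a : ℂ) else 0) := by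
    rw [Finset.mul_sum]
    refine Finset.sum_congr rfl fun i hi ↦ ?_
    rw [Finset.sum_eq_single_of_mem i hi fun j hj hji ↦ ?_]
    · simp [mul_conj, normSq_eq_norm_sq, mul_comm]
    · simp [sub_eq_zero, hν.eq_iff hi hj, hji.symm]
  have hint : (((∫ t in a..b, ‖∑ i ∈ S, u i * cexp (ν i * t * I)‖ ^ 2) -
      (b - a) * ∑ i ∈ S, ‖u i‖ ^ 2 : ℝ) : ℂ) = (W b - W a) / I := by
    have h := integral_mul_norm_sq_sum_exp S u ν continuous_one a b
    simp only [Pi.one_apply, one_mul, ofReal_one, ← ofReal_sub, integral_exp_mul_I] at h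
    push_cast at h ⊢
    rw [h, hdiag, hW]
    simp only [mul_exp_mul_conj_mul_exp, ← Finset.sum_sub_distrib, Finset.sum_div]
    refine Finset.sum_congr rfl fun i _ ↦ Finset.sum_congr rfl fun j _ ↦ ?_
    simp only [div_eq_mul_inv, mul_inv]
    ring
  rw [← Real.norm_eq_abs, ← norm_real, hint, norm_div, norm_I, div_one, two_mul]
  exact (norm_sub_le _ _).trans (add_le_add (hWH b) (hWH a))

theorem integral_norm_sq_sum_exp_int {f : ι → ℤ} (hf : Set.InjOn f S) :
    ∫ t in (0 : ℝ)..1, ‖∑ i ∈ S, u i * cexp ((-2 * π * f i : ℝ) * t * I)‖ ^ 2 =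
      ∑ i ∈ S, ‖u i‖ ^ 2 := by
  have hexp (k : ℤ) : ∫ t in (0 : ℝ)..1, cexp ((-2 * π * k : ℝ) * t * I) =
      if k = 0 then 1 else 0 := by
    have hper : cexp ((-2 * π * k : ℝ) * (1 : ℝ) * I) = 1 :=
      Complex.exp_eq_one_iff.2 ⟨-k, by push_cast; ring⟩
    rw [integral_exp_mul_I, hper]
    simp [pi_ne_zero]
  rw [← ofReal_inj]
  have h := integral_mul_norm_sq_sum_exp S u (fun i ↦ -2 * π * f i) continuous_one 0 1
  simp only [Pi.one_apply, one_mul, ofReal_one, ← ofReal_sub, ← mul_sub, ← Int.cast_sub,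
    hexp] at h
  rw [h, ofReal_sum]
  refine Finset.sum_congr rfl fun i hi ↦ ?_
  rw [Finset.sum_eq_single_of_mem i hi fun j hj hji ↦ ?_]
  · simp [mul_conj, normSq_eq_norm_sq]
  · simp [sub_eq_zero, hf.eq_iff hi hj, hji.symm]

theorem integral_bernoulliFun_one_mul_exp (k : ℤ) :
    ∫ t in (0 : ℝ)..1, (bernoulliFun 1 t : ℂ) * cexp ((-2 * π * k : ℝ) * t * I) =
      -1 / (2 * π * I * k) := by
  have h := bernoulliFourierCoeff_eq one_ne_zero k
  rw [bernoulliFourierCoeff, fourierCoeffOn_eq_integral] at h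
  simp only [sub_zero, div_one, one_smul, fourier_coe_apply, smul_eq_mul, Nat.factorial_one,
    Nat.cast_one, pow_one] at h
  rw [← h]
  refine intervalIntegral.integral_congr fun t _ ↦ ?_
  simp only [mul_comm (bernoulliFun 1 t : ℂ)]
  congr 2
  push_cast
  ring

/-- Hilbert's inequality: the form is the first Bernoulli function `t - 1 / 2` integrated against
the square of a trigonometric polynomial. Diagonal terms vanish by the convention `x / 0 = 0`. -/
theorem norm_sum_sum_div_int_sub_le {f : ι → ℤ} (hf : Set.InjOn f S) :
    ‖∑ i ∈ S, ∑ j ∈ S, u i * conj (u j) / (f i - f j)‖ ≤ π * ∑ i ∈ S, ‖u i‖ ^ 2 := by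
  set Q : ℝ → ℂ := fun t ↦ ∑ i ∈ S, u i * cexp ((-2 * π * f i : ℝ) * t * I) with hQ
  have hform : ((∫ t in (0 : ℝ)..1, bernoulliFun 1 t * ‖Q t‖ ^ 2 : ℝ) : ℂ) =
      -1 / (2 * π * I) * ∑ i ∈ S, ∑ j ∈ S, u i * conj (u j) / (f i - f j) := by
    have hB : Continuous (bernoulliFun 1) := by
      rw [funext bernoulliFun_one]
      fun_prop
    rw [integral_mul_norm_sq_sum_exp S u (fun i ↦ -2 * π * f i) hB]
    simp only [← ofReal_sub, ← mul_sub, ← Int.cast_sub, integral_bernoulliFun_one_mul_exp,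
      Finset.mul_sum]
    refine Finset.sum_congr rfl fun i _ ↦ Finset.sum_congr rfl fun j _ ↦ ?_
    simp only [div_eq_mul_inv, mul_inv, Int.cast_sub]
    ring
  have hbound : ‖∫ t in (0 : ℝ)..1, bernoulliFun 1 t * ‖Q t‖ ^ 2‖ ≤
      ∫ t in (0 : ℝ)..1, 1 / 2 * ‖Q t‖ ^ 2 := by
    refine intervalIntegral.norm_integral_le_of_norm_le zero_le_one
      (Eventually.of_forall fun t ht ↦ ?_) (Continuous.intervalIntegrable (by fun_prop) 0 1)
    rw [norm_mul, norm_pow, norm_norm, Real.norm_eq_abs, bernoulliFun_one]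
    gcongr
    exact abs_le.2 ⟨by linarith [ht.1], by linarith [ht.2]⟩
  rw [intervalIntegral.integral_const_mul, hQ, integral_norm_sq_sum_exp_int S u hf,
    ← norm_real, hform] at hbound
  have hnorm : ‖(-1 / (2 * π * I) : ℂ)‖ = (2 * π)⁻¹ := by
    simp [abs_of_pos pi_pos]
  rw [norm_mul, hnorm, inv_mul_le_iff₀ two_pi_pos] at hbound
  linarith

end ExponentialSums

section DirichletPolynomials

open scoped ComplexConjugate

theorem sinh_sub_self_le_mul_sinh {u : ℝ} (hu : 0 ≤ u) : Real.sinh u - u ≤ u * Real.sinh u := by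
  have hu' : 1 - rexp (-u) ≤ u := by linarith [add_one_le_exp (-u)]
  have hsinh : 0 ≤ Real.sinh u := Real.sinh_nonneg_iff.2 hu
  have hexp : rexp (-u) * rexp u = 1 := by rw [← Real.exp_add, neg_add_cancel, Real.exp_zero]
  have hq : Real.sinh u - (1 - rexp (-u)) * (1 + Real.sinh u) = -(1 - rexp (-u)) ^ 2 / 2 := by
    rw [Real.sinh_eq]
    linear_combination hexp / 2
  nlinarith [sq_nonneg (1 - rexp (-u))]

theorem abs_inv_sub_inv_sinh_le_one (u : ℝ) : |u⁻¹ - (Real.sinh u)⁻¹| ≤ 1 := by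
  wlog hu : 0 < u generalizing u
  · rcases eq_or_lt_of_le (not_lt.1 hu) with rfl | hu
    · simp
    · have h := this (-u) (neg_pos.2 hu)
      rwa [Real.sinh_neg, inv_neg, inv_neg, ← neg_sub', abs_neg] at h
  have hsinh : 0 < Real.sinh u := Real.sinh_pos_iff.2 hu
  have hle : u ≤ Real.sinh u := Real.self_le_sinh_iff.2 hu.le
  rw [inv_sub_inv hu.ne' hsinh.ne', abs_of_nonneg (by bound), div_le_one (by positivity)]
  exact sinh_sub_self_le_mul_sinh hu.le

theorem abs_inv_log_sub_log_sub_le {x y : ℝ} (hx : 0 < x) (hy : 0 < y) :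
    |(Real.log x - Real.log y)⁻¹ - √x * √y / (x - y)| ≤ 1 / 2 := by
  have hsinh : Real.sinh ((Real.log x - Real.log y) / 2) = (x - y) / (2 * (√x * √y)) := by
    rw [← Real.log_div hx.ne' hy.ne', ← Real.log_sqrt (by positivity),
      Real.sinh_log (by positivity), sqrt_div hx.le]
    have hx' := sq_sqrt hx.le
    have hy' := sq_sqrt hy.le
    field_simp
    rw [hx', hy']
  have hscale : (Real.log x - Real.log y)⁻¹ - √x * √y / (x - y) =
      (((Real.log x - Real.log y) / 2)⁻¹ - (Real.sinh ((Real.log x - Real.log y) / 2))⁻¹) / 2 := by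
    rw [hsinh]
    simp only [div_eq_mul_inv, mul_inv, inv_inv]
    ring
  rw [hscale, abs_div, abs_two]
  gcongr
  exact abs_inv_sub_inv_sinh_le_one _

theorem norm_sum_sum_div_log_sub_log_le {S : Finset ℕ} (hS : ∀ n ∈ S, 0 < n) (a : ℕ → ℂ) :
    ‖∑ m ∈ S, ∑ n ∈ S, a m * conj (a n) / ((Real.log m : ℂ) - Real.log n)‖ ≤
      π * ∑ n ∈ S, n * ‖a n‖ ^ 2 + 1 / 2 * (∑ n ∈ S, ‖a n‖) ^ 2 := by
  have hilbert := norm_sum_sum_div_int_sub_le S (fun n ↦ (√n : ℝ) * a n) (f := fun n ↦ n)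
    Nat.cast_injective.injOn
  have norm_sqrt_mul (n : ℕ) : ‖(√n : ℝ) * a n‖ ^ 2 = n * ‖a n‖ ^ 2 := by
    rw [norm_mul, mul_pow, norm_real, Real.norm_eq_abs, sq_abs, sq_sqrt n.cast_nonneg]
  simp only [norm_sqrt_mul] at hilbert
  set κ : ℕ → ℕ → ℝ := fun m n ↦ (Real.log m - Real.log n)⁻¹ - √m * √n / (m - n) with hκ
  have hκ_sum : ‖∑ m ∈ S, ∑ n ∈ S, a m * conj (a n) * κ m n‖ ≤ 1 / 2 * (∑ n ∈ S, ‖a n‖) ^ 2 := by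
    rw [sq, Finset.sum_mul_sum, Finset.mul_sum]
    refine norm_sum_le_of_le S fun m hm ↦ ?_
    rw [Finset.mul_sum]
    refine norm_sum_le_of_le S fun n hn ↦ ?_
    rw [norm_mul, norm_mul, norm_real, RCLike.norm_conj, mul_comm]
    gcongr
    exact abs_inv_log_sub_log_sub_le (Nat.cast_pos.2 (hS m hm)) (Nat.cast_pos.2 (hS n hn))
  have hsplit : ∑ m ∈ S, ∑ n ∈ S, a m * conj (a n) / ((Real.log m : ℂ) - Real.log n) =
      ∑ m ∈ S, ∑ n ∈ S, (√m : ℝ) * a m * conj ((√n : ℝ) * a n) / ((m : ℤ) - (n : ℤ)) +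
        ∑ m ∈ S, ∑ n ∈ S, a m * conj (a n) * κ m n := by
    simp only [← Finset.sum_add_distrib]
    refine Finset.sum_congr rfl fun m _ ↦ Finset.sum_congr rfl fun n _ ↦ ?_
    simp only [hκ, map_mul, conj_ofReal]
    push_cast
    ring
  rw [hsplit]
  exact norm_add_le_of_le hilbert hκ_sum

theorem natCast_cpow_neg_mul_I {n : ℕ} (hn : 0 < n) (t : ℝ) :
    (n : ℂ) ^ (-(t * I)) = cexp ((-Real.log n : ℝ) * t * I) := by
  rw [cpow_def_of_ne_zero (Nat.cast_ne_zero.2 hn.ne'), ← natCast_log]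
  push_cast
  ring_nf

theorem abs_integral_norm_sq_dirichletPolynomial_sub_le {S : Finset ℕ} (hS : ∀ n ∈ S, 0 < n)
    (a : ℕ → ℂ) (A B : ℝ) :
    |(∫ t in A..B, ‖∑ n ∈ S, a n * (n : ℂ) ^ (-(t * I))‖ ^ 2) - (B - A) * ∑ n ∈ S, ‖a n‖ ^ 2| ≤
      2 * π * ∑ n ∈ S, n * ‖a n‖ ^ 2 + (∑ n ∈ S, ‖a n‖) ^ 2 := by
  have hcpow (t : ℝ) : ∑ n ∈ S, a n * (n : ℂ) ^ (-(t * I)) =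
      ∑ n ∈ S, a n * cexp ((-Real.log n : ℝ) * t * I) :=
    Finset.sum_congr rfl fun n hn ↦ by rw [natCast_cpow_neg_mul_I (hS n hn)]
  have hinj : Set.InjOn (fun n : ℕ ↦ -Real.log n) S := fun m hm n hn hmn ↦
    Nat.cast_injective <| log_injOn_pos (Set.mem_Ioi.2 <| Nat.cast_pos.2 (hS m hm))
      (Set.mem_Ioi.2 <| Nat.cast_pos.2 (hS n hn)) (neg_injective hmn)
  simp_rw [hcpow]
  refine (abs_integral_norm_sq_sum_exp_sub_le S a _ hinj (fun v hv ↦ ?_) A B).trans_eq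
    (b := 2 * (π * ∑ n ∈ S, n * ‖a n‖ ^ 2 + 1 / 2 * (∑ n ∈ S, ‖a n‖) ^ 2)) (by ring)
  have hneg : ∑ m ∈ S, ∑ n ∈ S, v m * conj (v n) / (((-Real.log m : ℝ) : ℂ) - (-Real.log n : ℝ)) =
      -∑ m ∈ S, ∑ n ∈ S, v m * conj (v n) / ((Real.log m : ℂ) - Real.log n) := by
    simp only [← Finset.sum_neg_distrib, ofReal_neg, neg_sub_neg, ← div_neg, neg_sub]
  rw [hneg, norm_neg]
  simpa only [hv] using norm_sum_sum_div_log_sub_log_le hS v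

end DirichletPolynomials

section MeanSquare

open Set Topology

variable {E : Type*} [NormedAddCommGroup E]

theorem norm_le_of_norm_two_mul_sub_le {f : ℝ → E} {x₀ B C : ℝ} (hx₀ : 0 < x₀)
    (hB : ∀ x ∈ Icc x₀ (2 * x₀), ‖f x‖ ≤ B) (hC : ∀ x, x₀ ≤ x → ‖f (2 * x) - f x‖ ≤ C * x)
    {x : ℝ} (hx : x₀ ≤ x) : ‖f x‖ ≤ B + C * x := by
  have hdyadic (k : ℕ) : ∀ x ∈ Icc x₀ (2 ^ k * (2 * x₀)), ‖f x‖ ≤ B + C * x := by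
    induction k with
    | zero =>
      intro x hx
      linarith [hB x (by simpa using hx), (norm_nonneg _).trans (hC x hx.1)]
    | succ k ih =>
      intro x hx
      rw [pow_succ'] at hx
      rcases le_total x (2 * x₀) with hx₂ | hx₂
      · linarith [hB x ⟨hx.1, hx₂⟩, (norm_nonneg _).trans (hC x hx.1)]
      have hhalf : x / 2 ∈ Icc x₀ (2 ^ k * (2 * x₀)) :=
        ⟨by linarith, by linarith [hx.2, mul_assoc (2 : ℝ) (2 ^ k) (2 * x₀)]⟩
      calc ‖f x‖ ≤ ‖f (x / 2)‖ + ‖f x - f (x / 2)‖ := norm_le_norm_add_norm_sub' _ _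
        _ ≤ B + C * (x / 2) + C * (x / 2) := by
          gcongr
          · exact ih _ hhalf
          · simpa only [mul_div_cancel₀ x two_ne_zero] using hC _ hhalf.1
        _ = B + C * x := by ring
  obtain ⟨k, hk⟩ := pow_unbounded_of_one_lt (x / (2 * x₀)) one_lt_two
  exact hdyadic k x ⟨hx, ((div_lt_iff₀ (by positivity)).1 hk).le⟩

theorem isBigO_id_of_two_mul_sub {f : ℝ → E} {c : ℝ} (hf : ContinuousOn f (Ici c))
    (h : (fun x ↦ f (2 * x) - f x) =O[atTop] (fun x ↦ x)) : f =O[atTop] (fun x ↦ x) := by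
  obtain ⟨C, hC⟩ := h.bound
  obtain ⟨x₀, hx₀⟩ := eventually_atTop.1 (hC.and (eventually_ge_atTop (max c 1)))
  have hle {x : ℝ} (hx : x₀ ≤ x) : c ≤ x ∧ 1 ≤ x := max_le_iff.1 (hx₀ x hx).2
  obtain ⟨B, hB⟩ := (isCompact_Icc (a := x₀) (b := 2 * x₀)).exists_bound_of_continuousOn
    (hf.mono fun x hx ↦ (hle hx.1).1)
  refine IsBigO.of_bound (|B| + C) ?_
  filter_upwards [eventually_ge_atTop x₀] with x hx
  have hnorm {x : ℝ} (hx : x₀ ≤ x) : ‖x‖ = x :=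
    Real.norm_of_nonneg (zero_le_one.trans (hle hx).2)
  have hfx := norm_le_of_norm_two_mul_sub_le (zero_lt_one.trans_le (hle le_rfl).2) hB
    (fun y hy ↦ by simpa only [hnorm hy] using (hx₀ y hy).1) hx
  rw [hnorm hx]
  nlinarith [(hle hx).2, abs_nonneg B, le_abs_self B]

theorem continuousOn_primitive_Ici [NormedSpace ℝ E] {f : ℝ → E} {c : ℝ}
    (hf : ContinuousOn f (Ici c)) : ContinuousOn (fun x ↦ ∫ t in c..x, f t) (Ici c) := by
  intro x hx
  have hcx : c ≤ x + 1 := (mem_Ici.1 hx).trans (lt_add_one x).le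
  have hcont := intervalIntegral.continuousOn_primitive_interval (a := c) (b := x + 1)
    (μ := MeasureTheory.volume) (f := f)
    ((hf.mono fun t ht ↦ (uIcc_of_le hcx ▸ ht).1).integrableOn_compact isCompact_uIcc)
  rw [uIcc_of_le hcx] at hcont
  refine (hcont x ⟨hx, (lt_add_one x).le⟩).mono_of_mem_nhdsWithin ?_
  rw [← Ici_inter_Iic]
  exact inter_mem_nhdsWithin _ (Iic_mem_nhds (lt_add_one x))

theorem sum_Icc_one_isBigO {f : ℕ → E} {g : ℕ → ℝ} (h : f =O[atTop] g)
    (hg : ∀ n, 1 ≤ n → 0 < g n) :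
    (fun N ↦ ∑ n ∈ Finset.Icc 1 N, f n) =O[atTop] fun N ↦ ∑ n ∈ Finset.Icc 1 N, g n := by
  obtain ⟨C, -, hC⟩ := bound_of_isBigO_nat_atTop h
  refine IsBigO.of_bound C (Eventually.of_forall fun N ↦ ?_)
  have hsum : 0 ≤ ∑ n ∈ Finset.Icc 1 N, g n :=
    Finset.sum_nonneg fun n hn ↦ (hg n (Finset.mem_Icc.1 hn).1).le
  rw [Real.norm_of_nonneg hsum, Finset.mul_sum]
  refine norm_sum_le_of_le _ fun n hn ↦ ?_
  have hgn := hg n (Finset.mem_Icc.1 hn).1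
  simpa only [Real.norm_of_nonneg hgn.le] using hC hgn.ne'

theorem sum_Icc_inv_sqrt_le (N : ℕ) : ∑ n ∈ Finset.Icc 1 N, (√n)⁻¹ ≤ 2 * √N := by
  induction N with
  | zero => simp
  | succ N ih =>
    rw [Finset.sum_Icc_succ_top (Nat.le_add_left 1 N)]
    have hN : √(N + 1 : ℝ) ^ 2 = √N ^ 2 + 1 := by
      rw [sq_sqrt (by positivity), sq_sqrt N.cast_nonneg]
    have hpos : 0 < √(N + 1 : ℝ) := by positivity
    have hstep : (√(N + 1 : ℝ))⁻¹ ≤ 2 * (√(N + 1 : ℝ) - √N) := by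
      rw [inv_le_iff_one_le_mul₀ hpos]
      nlinarith [sq_nonneg (√(N + 1 : ℝ) - √N)]
    push_cast
    linarith

section Coefficients

variable {a : ℕ → E}

theorem sum_mul_norm_sq_isBigO (ha : (fun n ↦ ‖a n‖ ^ 2) =O[atTop] fun n ↦ (n : ℝ)⁻¹) :
    (fun N : ℕ ↦ ∑ n ∈ Finset.Icc 1 N, n * ‖a n‖ ^ 2) =O[atTop] fun N ↦ (N : ℝ) := by
  have h : (fun n : ℕ ↦ n * ‖a n‖ ^ 2) =O[atTop] fun _ ↦ (1 : ℝ) := by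
    refine ((isBigO_refl (fun n : ℕ ↦ (n : ℝ)) atTop).mul ha).congr' EventuallyEq.rfl ?_
    filter_upwards [eventually_ne_atTop 0] with n hn
    exact mul_inv_cancel₀ (Nat.cast_ne_zero.2 hn)
  simpa using sum_Icc_one_isBigO h fun _ _ ↦ one_pos

theorem sq_sum_norm_isBigO (ha : (fun n ↦ ‖a n‖ ^ 2) =O[atTop] fun n ↦ (n : ℝ)⁻¹) :
    (fun N : ℕ ↦ (∑ n ∈ Finset.Icc 1 N, ‖a n‖) ^ 2) =O[atTop] fun N ↦ (N : ℝ) := by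
  have h : (fun n : ℕ ↦ ‖a n‖) =O[atTop] fun n ↦ (√n)⁻¹ :=
    IsBigO.of_pow (n := 2) two_ne_zero (by simpa [Pi.pow_def, inv_pow] using ha)
  have hsum := (sum_Icc_one_isBigO h fun n hn ↦ by positivity).trans
    (IsBigO.of_bound 2 (g := fun N : ℕ ↦ √N) (Eventually.of_forall fun N ↦ ?_))
  · simpa using hsum.pow 2
  · rw [Real.norm_of_nonneg (by positivity), Real.norm_of_nonneg (by positivity)]
    exact sum_Icc_inv_sqrt_le N

theorem sum_norm_sq_sub_mul_log_isBigO {β δ : ℝ} (hδ : 0 < δ)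
    (ha : (fun n : ℕ ↦ ‖a n‖ ^ 2 - β / n) =O[atTop] fun n ↦ (n : ℝ) ^ (-1 - δ)) :
    (fun N : ℕ ↦ ∑ n ∈ Finset.Icc 1 N, ‖a n‖ ^ 2 - β * Real.log N) =O[atTop]
      fun _ ↦ (1 : ℝ) := by
  have hsummable : Summable fun n : ℕ ↦ (n : ℝ) ^ (-1 - δ) :=
    Real.summable_nat_rpow.2 (by linarith)
  have hdiff : (fun N : ℕ ↦ ∑ n ∈ Finset.Icc 1 N, (‖a n‖ ^ 2 - β / n)) =O[atTop]
      fun _ ↦ (1 : ℝ) := by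
    refine (sum_Icc_one_isBigO ha fun n hn ↦ by positivity).trans (IsBigO.of_bound
      (∑' n : ℕ, (n : ℝ) ^ (-1 - δ)) (Eventually.of_forall fun N ↦ ?_))
    rw [Real.norm_of_nonneg (by positivity), norm_one, mul_one]
    exact hsummable.sum_le_tsum _ fun _ _ ↦ by positivity
  have hharmonic : (fun N : ℕ ↦ (harmonic N : ℝ) - Real.log N) =O[atTop] fun _ ↦ (1 : ℝ) := by
    refine IsBigO.of_bound 1 ?_
    filter_upwards [eventually_ge_atTop 1] with N hN
    have hlog : Real.log N ≤ Real.log (N + 1 : ℕ) := by gcongr; exact N.le_succ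
    rw [norm_one, mul_one, Real.norm_eq_abs, abs_le]
    constructor <;> linarith [log_add_one_le_harmonic N, harmonic_le_one_add_log N]
  refine (hdiff.add (hharmonic.const_mul_left β)).congr_left fun N ↦ ?_
  rw [harmonic_eq_sum_Icc, Rat.cast_sum, Finset.sum_sub_distrib, mul_sub, Finset.mul_sum]
  simp only [div_eq_mul_inv, Rat.cast_inv, Rat.cast_natCast]
  ring

end Coefficients

section Dyadic

variable {a : ℕ → ℂ} {β δ η C c : ℝ} {F : ℝ → ℂ}

theorem log_natCeil_sub_log_isBigO_one :
    (fun T : ℝ ↦ Real.log ⌈T⌉₊ - Real.log T) =O[atTop] fun _ ↦ (1 : ℝ) := by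
  refine ((tendsto_nat_ceil_div_atTop (R := ℝ)).log one_ne_zero).isBigO_one ℝ |>.congr' ?_ .rfl
  filter_upwards [eventually_gt_atTop 0] with T hT
  rw [Real.log_div (Nat.cast_ne_zero.2 (Nat.ceil_pos.2 hT).ne') hT.ne']

theorem integral_norm_sq_dirichletPolynomial_isBigO (hδ : 0 < δ)
    (ha : (fun n : ℕ ↦ ‖a n‖ ^ 2 - β / n) =O[atTop] fun n ↦ (n : ℝ) ^ (-1 - δ)) :
    (fun T : ℝ ↦ (∫ t in T..2 * T, ‖∑ n ∈ Finset.Icc 1 ⌈T⌉₊, a n * (n : ℂ) ^ (-(t * I))‖ ^ 2) -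
      β * T * Real.log T) =O[atTop] fun T ↦ T := by
  have hceil : (fun T : ℝ ↦ (⌈T⌉₊ : ℝ)) =O[atTop] fun T ↦ T := isEquivalent_nat_ceil.isBigO
  have ha' : (fun n ↦ ‖a n‖ ^ 2) =O[atTop] fun n ↦ (n : ℝ)⁻¹ := by
    have hpow : (fun n : ℕ ↦ (n : ℝ) ^ (-1 - δ)) =O[atTop] fun n ↦ (n : ℝ)⁻¹ := by
      refine IsBigO.of_bound' ?_
      filter_upwards [eventually_ge_atTop 1] with n hn
      rw [← rpow_neg_one, Real.norm_of_nonneg (by positivity),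
        Real.norm_of_nonneg (by positivity)]
      exact rpow_le_rpow_of_exponent_le (Nat.one_le_cast.2 hn) (by linarith)
    simpa [div_eq_mul_inv] using
      (ha.trans hpow).add ((isBigO_refl (fun n : ℕ ↦ (n : ℝ)⁻¹) atTop).const_mul_left β)
  have hmean : (fun T : ℝ ↦
      (∫ t in T..2 * T, ‖∑ n ∈ Finset.Icc 1 ⌈T⌉₊, a n * (n : ℂ) ^ (-(t * I))‖ ^ 2) -
        T * ∑ n ∈ Finset.Icc 1 ⌈T⌉₊, ‖a n‖ ^ 2) =O[atTop] fun T ↦ T := by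
    refine (IsBigO.of_norm_le fun T ↦ ?_).trans
      ((((sum_mul_norm_sq_isBigO ha').const_mul_left (2 * π)).add
        (sq_sum_norm_isBigO ha')).comp_tendsto tendsto_nat_ceil_atTop |>.trans hceil)
    simpa [two_mul] using abs_integral_norm_sq_dirichletPolynomial_sub_le
      (fun n hn ↦ (Finset.mem_Icc.1 hn).1) a T (2 * T)
  have hsum : (fun T : ℝ ↦ T * (∑ n ∈ Finset.Icc 1 ⌈T⌉₊, ‖a n‖ ^ 2 - β * Real.log ⌈T⌉₊ +
      β * (Real.log ⌈T⌉₊ - Real.log T))) =O[atTop] fun T ↦ T := by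
    simpa using (isBigO_refl (fun T : ℝ ↦ T) atTop).mul
      (((sum_norm_sq_sub_mul_log_isBigO hδ ha).comp_tendsto tendsto_nat_ceil_atTop).add
        (log_natCeil_sub_log_isBigO_one.const_mul_left β))
  exact (hmean.add hsum).congr_left fun T ↦ by ring

theorem abs_norm_sq_sub_norm_sq_le_add (z w : E) :
    |‖z‖ ^ 2 - ‖w‖ ^ 2| ≤ ‖z - w‖ ^ 2 + 2 * ‖z - w‖ * ‖w‖ := by
  have hzw : |‖z‖ - ‖w‖| ≤ ‖z - w‖ := abs_norm_sub_norm_le z w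
  calc |‖z‖ ^ 2 - ‖w‖ ^ 2| = |‖z‖ - ‖w‖| * (‖z‖ + ‖w‖) := by
        rw [sq_sub_sq, abs_mul, abs_of_nonneg (by positivity), mul_comm]
    _ ≤ ‖z - w‖ * (‖z - w‖ + ‖w‖ + ‖w‖) := by
        gcongr
        exact norm_le_norm_sub_add z w
    _ = ‖z - w‖ ^ 2 + 2 * ‖z - w‖ * ‖w‖ := by ring

theorem abs_norm_sq_sub_norm_sq_le {z w : E} {e : ℝ} (h : ‖z - w‖ ≤ e) :
    |‖z‖ ^ 2 - ‖w‖ ^ 2| ≤ e ^ 2 + e + e * ‖w‖ ^ 2 := by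
  have he : 0 ≤ e := (norm_nonneg _).trans h
  calc |‖z‖ ^ 2 - ‖w‖ ^ 2| ≤ ‖z - w‖ ^ 2 + 2 * ‖z - w‖ * ‖w‖ :=
        abs_norm_sq_sub_norm_sq_le_add z w
    _ ≤ e ^ 2 + 2 * e * ‖w‖ := by gcongr
    _ ≤ e ^ 2 + e + e * ‖w‖ ^ 2 := by nlinarith [mul_nonneg he (sq_nonneg (‖w‖ - 1))]

theorem abs_integral_norm_sq_sub_le {f g : ℝ → E} {x y e : ℝ} (hxy : x ≤ y)
    (hf : ContinuousOn f (Icc x y)) (hg : Continuous g)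
    (h : ∀ t ∈ Icc x y, ‖f t - g t‖ ≤ e) :
    |(∫ t in x..y, ‖f t‖ ^ 2) - ∫ t in x..y, ‖g t‖ ^ 2| ≤
      (e ^ 2 + e) * (y - x) + e * ∫ t in x..y, ‖g t‖ ^ 2 := by
  have hfint : IntervalIntegrable (fun t ↦ ‖f t‖ ^ 2) MeasureTheory.volume x y :=
    (hf.norm.pow 2).intervalIntegrable_of_Icc hxy
  have hgint : IntervalIntegrable (fun t ↦ ‖g t‖ ^ 2) MeasureTheory.volume x y :=
    (hg.norm.pow 2).intervalIntegrable x y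
  rw [← intervalIntegral.integral_sub hfint hgint, ← Real.norm_eq_abs]
  calc ‖∫ t in x..y, (‖f t‖ ^ 2 - ‖g t‖ ^ 2)‖
      ≤ ∫ t in x..y, (e ^ 2 + e + e * ‖g t‖ ^ 2) :=
        intervalIntegral.norm_integral_le_of_norm_le hxy
          (Eventually.of_forall fun t ht ↦
            abs_norm_sq_sub_norm_sq_le (h t (Ioc_subset_Icc_self ht)))
          (intervalIntegrable_const.add (hgint.const_mul e))
    _ = (e ^ 2 + e) * (y - x) + e * ∫ t in x..y, ‖g t‖ ^ 2 := by
        rw [intervalIntegral.integral_add intervalIntegrable_const (hgint.const_mul e),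
          intervalIntegral.integral_const_mul, intervalIntegral.integral_const, smul_eq_mul,
          mul_comm (y - x)]

theorem integral_norm_sq_sub_integral_norm_sq_isBigO {f : ℝ → E} {P : ℝ → ℝ → E} (hη : 0 < η)
    (hf : ContinuousOn f (Ici c)) (hP : ∀ T, Continuous (P T))
    (hP_int : (fun T ↦ ∫ t in T..2 * T, ‖P T t‖ ^ 2) =O[atTop] fun T ↦ T * T ^ η)
    (happrox : ∀ᶠ T in atTop, ∀ t ∈ Icc T (2 * T), ‖f t - P T t‖ ≤ C * T ^ (-η)) :
    (fun T ↦ (∫ t in T..2 * T, ‖f t‖ ^ 2) - ∫ t in T..2 * T, ‖P T t‖ ^ 2) =O[atTop]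
      fun T ↦ T := by
  have herr : (fun T : ℝ ↦ C * T ^ (-η)) =O[atTop] fun _ ↦ (1 : ℝ) :=
    ((tendsto_rpow_neg_atTop hη).const_mul C).isBigO_one ℝ
  have hconst : (fun T : ℝ ↦ ((C * T ^ (-η)) ^ 2 + C * T ^ (-η)) * T) =O[atTop] fun T ↦ T := by
    have hsq := herr.pow 2
    simp only [one_pow] at hsq
    simpa only [one_mul] using (hsq.add herr).mul (isBigO_refl (fun T : ℝ ↦ T) atTop)
  have hmul : (fun T : ℝ ↦ C * T ^ (-η) * ∫ t in T..2 * T, ‖P T t‖ ^ 2) =O[atTop]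
      fun T ↦ T := by
    refine (((isBigO_refl (fun T : ℝ ↦ C * T ^ (-η)) atTop).mul hP_int).congr' .rfl ?_).trans
      (isBigO_const_mul_self C (fun T : ℝ ↦ T) atTop)
    filter_upwards [eventually_gt_atTop 0] with T hT
    have hTη : T ^ (-η) * T ^ η = 1 := by rw [← rpow_add hT, neg_add_cancel, rpow_zero]
    linear_combination C * T * hTη
  refine IsBigO.trans (IsBigO.of_norm_eventuallyLE ?_) (hconst.add hmul)
  filter_upwards [happrox, eventually_ge_atTop (max c 0)] with T hT hcT
  have hT₀ : 0 ≤ T := (le_max_right c 0).trans hcT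
  have hle := abs_integral_norm_sq_sub_le (by linarith : T ≤ 2 * T)
    (hf.mono fun t ht ↦ (le_max_left c 0).trans (hcT.trans ht.1)) (hP T) hT
  rwa [two_mul T, add_sub_cancel_left, ← two_mul] at hle

theorem integral_norm_sq_dyadic_sub_isBigO (hη : 0 < η) (hF : ContinuousOn F (Ici c))
    (hδ : 0 < δ)
    (ha : (fun n : ℕ ↦ ‖a n‖ ^ 2 - β / n) =O[atTop] fun n ↦ (n : ℝ) ^ (-1 - δ))
    (happrox : ∀ᶠ T in atTop, ∀ t ∈ Icc T (2 * T),
      ‖F t - ∑ n ∈ Finset.Icc 1 ⌈T⌉₊, a n * (n : ℂ) ^ (-(t * I))‖ ≤ C * T ^ (-η)) :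
    (fun T ↦ (∫ t in T..2 * T, ‖F t‖ ^ 2) - β * T * Real.log T) =O[atTop] fun T ↦ T := by
  have hmain := integral_norm_sq_dirichletPolynomial_isBigO hδ ha
  have hlog : Real.log =O[atTop] fun T ↦ T ^ η := (isLittleO_log_rpow_atTop hη).isBigO
  have hT : (fun T : ℝ ↦ T) =O[atTop] fun T ↦ T * T ^ η := by
    simpa using (isBigO_refl (fun T : ℝ ↦ T) atTop).mul
      ((isLittleO_const_log_atTop (c := 1)).isBigO.trans hlog)
  have hTlog : (fun T : ℝ ↦ β * T * Real.log T) =O[atTop] fun T ↦ T * T ^ η :=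
    (isBigO_const_mul_self β (fun T : ℝ ↦ T) atTop).mul hlog
  have hP (T : ℝ) : Continuous fun t : ℝ ↦
      ∑ n ∈ Finset.Icc 1 ⌈T⌉₊, a n * (n : ℂ) ^ (-(t * I)) := by
    refine continuous_finsetSum _ fun n hn ↦ continuous_const.mul
      (Continuous.const_cpow (by fun_prop) (Or.inl ?_))
    exact Nat.cast_ne_zero.2 (zero_lt_one.trans_le (Finset.mem_Icc.1 hn).1).ne'
  have hP_int := ((hmain.trans hT).add hTlog).congr_left fun T ↦ sub_add_cancel _ _
  exact ((integral_norm_sq_sub_integral_norm_sq_isBigO hη hF hP hP_int happrox).add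
    hmain).congr_left fun T ↦ sub_add_sub_cancel _ _ _

theorem integral_norm_sq_sub_mul_log_isBigO (hη : 0 < η) (hF : ContinuousOn F (Ici c))
    (hδ : 0 < δ)
    (ha : (fun n : ℕ ↦ ‖a n‖ ^ 2 - β / n) =O[atTop] fun n ↦ (n : ℝ) ^ (-1 - δ))
    (happrox : ∀ᶠ T in atTop, ∀ t ∈ Icc T (2 * T),
      ‖F t - ∑ n ∈ Finset.Icc 1 ⌈T⌉₊, a n * (n : ℂ) ^ (-(t * I))‖ ≤ C * T ^ (-η)) :
    (fun T ↦ (∫ t in c..T, ‖F t‖ ^ 2) - β * T * Real.log T) =O[atTop] fun T ↦ T := by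
  have hcont : ContinuousOn (fun T ↦ (∫ t in c..T, ‖F t‖ ^ 2) - β * T * Real.log T)
      (Ici (max c 1)) := by
    refine ((continuousOn_primitive_Ici (hF.norm.pow 2)).mono
      (Ici_subset_Ici.2 (le_max_left c 1))).sub (ContinuousOn.mul (by fun_prop) ?_)
    exact Real.continuousOn_log.mono fun T hT ↦
      (zero_lt_one.trans_le ((le_max_right c 1).trans hT)).ne'
  refine isBigO_id_of_two_mul_sub hcont ?_
  refine ((integral_norm_sq_dyadic_sub_isBigO hη hF hδ ha happrox).sub
    (isBigO_const_mul_self (2 * β * Real.log 2) (fun T : ℝ ↦ T) atTop)).congr' ?_ .rfl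
  filter_upwards [eventually_ge_atTop (max c 1)] with T hT
  have hT₀ : 0 < T := zero_lt_one.trans_le ((le_max_right c 1).trans hT)
  have hcT : c ≤ T := (le_max_left c 1).trans hT
  have hint {x y : ℝ} (hx : c ≤ x) (hy : x ≤ y) :
      IntervalIntegrable (fun t ↦ ‖F t‖ ^ 2) MeasureTheory.volume x y :=
    ((hF.norm.pow 2).mono fun t ht ↦ hx.trans ht.1).intervalIntegrable_of_Icc hy
  have hsplit := intervalIntegral.integral_add_adjacent_intervals (hint le_rfl hcT)
    (hint hcT (by linarith : T ≤ 2 * T))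
  rw [Real.log_mul two_ne_zero hT₀.ne']
  linear_combination hsplit

end Dyadic

end MeanSquare

section ZetaRemainder

open Set Topology

/-- The tail `∑_{n > m} n^{-s}` of the zeta series, continued to all `s` by subtracting the first
`m` terms from `ζ(s)`. -/
noncomputable def zetaTail (m : ℕ) (s : ℂ) : ℂ :=
  riemannZeta s - ∑ n ∈ Finset.Icc 1 m, (n : ℂ) ^ (-s)

/-- The error in approximating `zetaTail m s` by the integral `∫_m^∞ y^{-s} dy = m^{1-s}/(s-1)`. -/
noncomputable def zetaRemainder (m : ℕ) (s : ℂ) : ℂ :=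
  zetaTail m s - (m : ℂ) ^ (1 - s) / (s - 1)

theorem zetaRemainder_sub_succ (m : ℕ) (s : ℂ) :
    zetaRemainder m s - zetaRemainder (m + 1) s =
      ((m + 1 : ℕ) : ℂ) ^ (-s) +
        (((m + 1 : ℕ) : ℂ) ^ (1 - s) - (m : ℂ) ^ (1 - s)) / (s - 1) := by
  rw [zetaRemainder, zetaRemainder, zetaTail, zetaTail, Finset.sum_Icc_succ_top (by lia)]
  ring

theorem differentiableAt_zetaTail (m : ℕ) {s : ℂ} (hs : s ≠ 1) :
    DifferentiableAt ℂ (zetaTail m) s := by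
  refine (differentiableAt_riemannZeta hs).sub (DifferentiableAt.fun_sum fun n hn ↦ ?_)
  exact DifferentiableAt.const_cpow (by fun_prop)
    (Or.inl (Nat.cast_ne_zero.2 (by grind)))

theorem differentiableAt_zetaRemainder {m : ℕ} (hm : m ≠ 0) {s : ℂ} (hs : s ≠ 1) :
    DifferentiableAt ℂ (zetaRemainder m) s :=
  (differentiableAt_zetaTail m hs).sub <|
    (DifferentiableAt.const_cpow (by fun_prop) (Or.inl (Nat.cast_ne_zero.2 hm))).div
      (by fun_prop) (sub_ne_zero.2 hs)

theorem rpow_le_two_rpow_abs_mul_rpow {x y : ℝ} (hx : 0 < x) (hxy : x ≤ y) (hy : y ≤ 2 * x)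
    (p : ℝ) : y ^ p ≤ 2 ^ |p| * x ^ p := by
  have h1 : 1 ≤ y / x := (one_le_div hx).2 hxy
  calc y ^ p = (y / x) ^ p * x ^ p := by
        rw [← Real.mul_rpow (by positivity) hx.le, div_mul_cancel₀ _ hx.ne']
    _ ≤ (y / x) ^ |p| * x ^ p := by
        gcongr ?_ * _
        exact Real.rpow_le_rpow_of_exponent_le h1 (le_abs_self p)
    _ ≤ 2 ^ |p| * x ^ p := by gcongr; exact (div_le_iff₀ hx).2 hy

theorem hasDerivAt_sub_mul_cpow_add_cpow_div {s : ℂ} (hs : s ≠ 1) (a : ℝ) {y : ℝ} (hy : 0 < y) :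
    HasDerivAt (fun y : ℝ ↦ ((y : ℂ) - a) * (y : ℂ) ^ (-s) + (y : ℂ) ^ (1 - s) / (s - 1))
      (-s * ((y : ℂ) - a) * (y : ℂ) ^ (-s - 1)) y := by
  have hcpow {r : ℂ} : HasDerivAt (fun y : ℝ ↦ (y : ℂ) ^ r) (r * (y : ℂ) ^ (r - 1)) y := by
    simpa using ((hasDerivAt_id (y : ℂ)).cpow_const (c := r)
      (by simp [slitPlane, hy])).comp_ofReal
  have hlin : HasDerivAt (fun y : ℝ ↦ (y : ℂ) - a) 1 y :=
    (hasDerivAt_id (y : ℂ)).comp_ofReal.sub_const _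
  refine ((hlin.mul hcpow).add (hcpow.div_const (s - 1))).congr_deriv ?_
  have : s - 1 ≠ 0 := sub_ne_zero.2 hs
  rw [show 1 - s - 1 = -s by ring]
  field_simp
  ring

theorem norm_zetaRemainder_sub_succ_le {m : ℕ} (hm : m ≠ 0) {s : ℂ} (hs : s ≠ 1) :
    ‖zetaRemainder m s - zetaRemainder (m + 1) s‖ ≤
      ‖s‖ * 2 ^ |s.re + 1| * (m : ℝ) ^ (-s.re - 1) := by
  have hm1 : (1 : ℝ) ≤ m := mod_cast Nat.one_le_iff_ne_zero.2 hm
  have hderiv : ∀ y ∈ Ico (m : ℝ) (m + 1),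
      ‖-s * ((y : ℂ) - (m : ℝ)) * (y : ℂ) ^ (-s - 1)‖ ≤
        ‖s‖ * 2 ^ |s.re + 1| * (m : ℝ) ^ (-s.re - 1) := by
    intro y ⟨hmy, hym⟩
    have hy : 0 < y := by linarith
    have hlen : ‖(y : ℂ) - (m : ℝ)‖ ≤ 1 := by
      rw [← ofReal_sub, norm_real, Real.norm_of_nonneg (by linarith)]
      linarith
    have hpow := rpow_le_two_rpow_abs_mul_rpow (by linarith) hmy (by linarith) (-s.re - 1)
    rw [norm_mul, norm_mul, norm_neg, norm_cpow_eq_rpow_re_of_pos hy,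
      mul_assoc ‖s‖ (2 ^ _)]
    rw [show |-s.re - 1| = |s.re + 1| by rw [← abs_neg]; congr 1; ring] at hpow
    calc ‖s‖ * ‖(y : ℂ) - (m : ℝ)‖ * y ^ (-s - 1).re ≤ ‖s‖ * 1 * y ^ (-s.re - 1) := by
          rw [show (-s - 1).re = -s.re - 1 by simp]
          gcongr
      _ ≤ ‖s‖ * (2 ^ |s.re + 1| * (m : ℝ) ^ (-s.re - 1)) := by rw [mul_one]; gcongr
  have hmvt := norm_image_sub_le_of_norm_deriv_le_segment'
    (fun y hy ↦ (hasDerivAt_sub_mul_cpow_add_cpow_div hs m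
      (by linarith [hy.1] : (0 : ℝ) < y)).hasDerivWithinAt) hderiv (m + 1 : ℝ) (by simp)
  rw [add_sub_cancel_left, mul_one] at hmvt
  refine (congrArg norm ?_).trans_le hmvt
  rw [zetaRemainder_sub_succ]
  push_cast
  ring

theorem zetaRemainder_eq_add_sum_Ico (s : ℂ) {m M : ℕ} (h : m ≤ M) :
    zetaRemainder m s = zetaRemainder M s +
      ∑ k ∈ Finset.Ico m M, (zetaRemainder k s - zetaRemainder (k + 1) s) := by
  have := Finset.sum_Ico_sub (fun k ↦ zetaRemainder k s) h
  simp_rw [← neg_sub (zetaRemainder (_ + 1) s), Finset.sum_neg_distrib, this]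
  ring

theorem hasSum_zetaTail (m : ℕ) {s : ℂ} (hs : 1 < s.re) :
    HasSum (fun n : ℕ ↦ ((n + m + 1 : ℕ) : ℂ) ^ (-s)) (zetaTail m s) := by
  have hzeta : HasSum (fun n : ℕ ↦ ((n + 1 : ℕ) : ℂ) ^ (-s)) (riemannZeta s) := by
    simpa [zeta_eq_tsum_one_div_nat_add_one_cpow hs, cpow_neg] using
      ((summable_nat_add_iff 1).2 (summable_one_div_nat_cpow.2 hs)).hasSum
  have hfinite : ∑ n ∈ Finset.Icc 1 m, (n : ℂ) ^ (-s) =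
      ∑ n ∈ Finset.range m, ((n + 1 : ℕ) : ℂ) ^ (-s) := by
    rw [Finset.range_eq_Ico, Finset.sum_Ico_add' (fun n : ℕ ↦ (n : ℂ) ^ (-s)) 0 m 1]
    rfl
  refine (hasSum_nat_add_iff (f := fun n : ℕ ↦ ((n + 1 : ℕ) : ℂ) ^ (-s)) m).2 ?_
  rwa [zetaTail, hfinite, sub_add_cancel]

theorem differentiableOn_tsum_of_eventually_norm_le {ι E : Type*} [NormedAddCommGroup E]
    [NormedSpace ℂ E] [CompleteSpace E] {F : ι → ℂ → E} {U : Set ℂ} (hU : IsOpen U)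
    (hF : ∀ n, DifferentiableOn ℂ (F n) U)
    (hbound : ∀ z ∈ U, ∃ u : ι → ℝ, Summable u ∧ ∀ᶠ w in 𝓝 z, ∀ n, ‖F n w‖ ≤ u n) :
    DifferentiableOn ℂ (fun z ↦ ∑' n, F n z) U := by
  intro z hz
  obtain ⟨u, hu, hFu⟩ := hbound z hz
  obtain ⟨V, hV, hVo, hzV⟩ := eventually_nhds_iff.1 (hFu.and (hU.mem_nhds hz))
  have hdiff := differentiableOn_tsum_of_summable_norm hu
    (fun n ↦ (hF n).mono fun w hw ↦ (hV w hw).2) hVo (fun n w hw ↦ (hV w hw).1 n)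
  exact (hdiff.differentiableAt (hVo.mem_nhds hzV)).differentiableWithinAt

theorem isPreconnected_halfSpace_re_gt_diff_countable (c : ℝ) {S : Set ℂ} (hS : S.Countable) :
    IsPreconnected ({z : ℂ | c < z.re} \ S) := by
  let φ : ℂ → ℂ := fun z ↦ ((c + rexp z.re : ℝ) : ℂ) + (z.im : ℂ) * I
  have hφre (z : ℂ) : (φ z).re = c + rexp z.re := by simp [φ, exp_ofReal_re]
  have hφim (z : ℂ) : (φ z).im = z.im := by simp [φ]
  have hφ : Function.Injective φ := fun z w hzw ↦ by
    have hre := congrArg re hzw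
    rw [hφre, hφre, add_right_inj, Real.exp_eq_exp] at hre
    exact Complex.ext hre (by rw [← hφim, hzw, hφim])
  have himage : φ '' (φ ⁻¹' S)ᶜ = {z : ℂ | c < z.re} \ S := by
    rw [← preimage_compl, image_preimage_eq_inter_range, sdiff_eq, inter_comm]
    congr 1
    ext z
    refine ⟨fun ⟨w, hw⟩ ↦ ?_, fun hz ↦ ⟨⟨Real.log (z.re - c), z.im⟩, ?_⟩⟩
    · simp [← hw, hφre, Real.exp_pos]
    · have : 0 < z.re - c := sub_pos.2 hz
      apply Complex.ext <;> simp [hφre, hφim, Real.exp_log this]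
  rw [← himage]
  refine ((hS.preimage_of_injOn hφ.injOn).isPathConnected_compl_of_one_lt_rank
    (by simp)).isConnected.isPreconnected.image φ ?_
  fun_prop

theorem tendsto_zetaRemainder_of_one_lt_re {s : ℂ} (hs : 1 < s.re) :
    Tendsto (fun m ↦ zetaRemainder m s) atTop (𝓝 0) := by
  have htail : Tendsto (fun m ↦ zetaTail m s) atTop (𝓝 0) := by
    simp_rw [← (hasSum_zetaTail _ hs).tsum_eq]
    exact tendsto_sum_nat_add fun n ↦ ((n + 1 : ℕ) : ℂ) ^ (-s)
  have hint : Tendsto (fun m : ℕ ↦ (m : ℂ) ^ (1 - s)) atTop (𝓝 0) := by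
    rw [tendsto_zero_iff_norm_tendsto_zero]
    refine ((tendsto_rpow_neg_atTop (sub_pos.2 hs)).comp tendsto_natCast_atTop_atTop).congr' ?_
    filter_upwards [eventually_gt_atTop 0] with m hm
    simp [norm_natCast_cpow_of_pos hm]
  simpa [zetaRemainder] using htail.sub (hint.div_const (s - 1))

theorem differentiableOn_tsum_zetaRemainder_sub_succ :
    DifferentiableOn ℂ
      (fun s ↦ ∑' k : ℕ, (zetaRemainder (k + 1) s - zetaRemainder (k + 1 + 1) s))
      ({s | 0 < s.re} \ {1}) := by
  have hopen : IsOpen ({s : ℂ | 0 < s.re} \ {1}) :=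
    (isOpen_lt continuous_const continuous_re).sdiff isClosed_singleton
  refine differentiableOn_tsum_of_eventually_norm_le hopen (fun k s hs ↦ ?_) fun z hz ↦ ?_
  · exact ((differentiableAt_zetaRemainder k.succ_ne_zero hs.2).sub
      (differentiableAt_zetaRemainder (k + 1).succ_ne_zero hs.2)).differentiableWithinAt
  have hz0 : 0 < z.re := hz.1
  have hcont : Continuous fun s : ℂ ↦ ‖s‖ * (2 : ℝ) ^ |s.re + 1| :=
    continuous_norm.mul (Continuous.rpow continuous_const (by fun_prop) (by simp))
  refine ⟨fun k ↦ (‖z‖ * 2 ^ |z.re + 1| + 1) * ((k + 1 : ℕ) : ℝ) ^ (-(z.re / 2) - 1), ?_, ?_⟩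
  · exact ((summable_nat_add_iff 1).2 (Real.summable_nat_rpow.2 (by linarith))).mul_left _
  filter_upwards [hopen.mem_nhds hz, hcont.continuousAt.eventually_le_const (lt_add_one _),
    continuous_re.continuousAt.eventually_const_le (half_lt_self hz0)] with w hw hwc hwre k
  refine (norm_zetaRemainder_sub_succ_le k.succ_ne_zero hw.2).trans ?_
  gcongr
  exact_mod_cast k.succ_pos

theorem sum_range_zetaRemainder_sub_succ (s : ℂ) (n : ℕ) :
    ∑ k ∈ Finset.range n, (zetaRemainder (k + 1) s - zetaRemainder (k + 1 + 1) s) =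
      zetaRemainder 1 s - zetaRemainder (n + 1) s :=
  Finset.sum_range_sub' (fun k ↦ zetaRemainder (k + 1) s) n

theorem summable_zetaRemainder_sub_succ {s : ℂ} (h0 : 0 < s.re) (h1 : s ≠ 1) :
    Summable fun k : ℕ ↦ zetaRemainder (k + 1) s - zetaRemainder (k + 1 + 1) s :=
  .of_norm_bounded
    (((summable_nat_add_iff 1).2 (Real.summable_nat_rpow.2 (by linarith))).mul_left _)
    fun k ↦ norm_zetaRemainder_sub_succ_le k.succ_ne_zero h1

theorem tendsto_zetaRemainder {s : ℂ} (h0 : 0 < s.re) (h1 : s ≠ 1) :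
    Tendsto (fun m ↦ zetaRemainder m s) atTop (𝓝 0) := by
  have hlim {s : ℂ} (h0 : 0 < s.re) (h1 : s ≠ 1) :
      Tendsto (fun m ↦ zetaRemainder m s) atTop (𝓝 (zetaRemainder 1 s -
        ∑' k : ℕ, (zetaRemainder (k + 1) s - zetaRemainder (k + 1 + 1) s))) := by
    refine (tendsto_add_atTop_iff_nat 1).1 ?_
    convert (summable_zetaRemainder_sub_succ h0 h1).hasSum.tendsto_sum_nat.const_sub
      (zetaRemainder 1 s) using 2 with n
    rw [sum_range_zetaRemainder_sub_succ, sub_sub_cancel]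
  have hopen : IsOpen ({s : ℂ | 0 < s.re} \ {1}) :=
    (isOpen_lt continuous_const continuous_re).sdiff isClosed_singleton
  have heq : EqOn (zetaRemainder 1)
      (fun s ↦ ∑' k : ℕ, (zetaRemainder (k + 1) s - zetaRemainder (k + 1 + 1) s))
      ({s | 0 < s.re} \ {1}) := by
    refine AnalyticOnNhd.eqOn_of_preconnected_of_eventuallyEq (z₀ := 2)
      (DifferentiableOn.analyticOnNhd (fun s hs ↦ (differentiableAt_zetaRemainder one_ne_zero
        hs.2).differentiableWithinAt) hopen)
      (differentiableOn_tsum_zetaRemainder_sub_succ.analyticOnNhd hopen)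
      (isPreconnected_halfSpace_re_gt_diff_countable 0 (countable_singleton 1)) (by simp) ?_
    filter_upwards [(isOpen_lt continuous_const continuous_re).mem_nhds
      (show (1 : ℝ) < (2 : ℂ).re by simp)] with s hs
    have hs : 1 < s.re := hs
    exact sub_eq_zero.1 (tendsto_nhds_unique
      (hlim (by linarith) (by rintro rfl; simp at hs)) (tendsto_zetaRemainder_of_one_lt_re hs))
  have := hlim h0 h1
  rwa [sub_eq_zero.2 (heq ⟨h0, h1⟩)] at this

theorem norm_zetaRemainder_sub_le {ε B : ℝ} (hε : 0 < ε) (hB : 0 ≤ B) {m M : ℕ} (hm : m ≠ 0)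
    (hmM : m ≤ M) {s : ℂ} (hs : s ≠ 1)
    (hpow : ∀ k ∈ Finset.Ico m M, (k : ℝ) ^ (ε - s.re) ≤ B) :
    ‖zetaRemainder m s - zetaRemainder M s‖ ≤
      ‖s‖ * 2 ^ |s.re + 1| * (∑' k : ℕ, (k : ℝ) ^ (-1 - ε)) * B := by
  have hsum : Summable fun k : ℕ ↦ (k : ℝ) ^ (-1 - ε) :=
    Real.summable_nat_rpow.2 (by linarith)
  calc ‖zetaRemainder m s - zetaRemainder M s‖
      = ‖∑ k ∈ Finset.Ico m M, (zetaRemainder k s - zetaRemainder (k + 1) s)‖ := by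
        rw [zetaRemainder_eq_add_sum_Ico s hmM, add_sub_cancel_left]
    _ ≤ ∑ k ∈ Finset.Ico m M, ‖s‖ * 2 ^ |s.re + 1| * B * (k : ℝ) ^ (-1 - ε) := by
        refine norm_sum_le_of_le _ fun k hk ↦ ?_
        have hk0 : k ≠ 0 := by grind
        refine (norm_zetaRemainder_sub_succ_le hk0 hs).trans ?_
        rw [show -s.re - 1 = (ε - s.re) + (-1 - ε) by ring,
          Real.rpow_add (Nat.cast_pos.2 (Nat.pos_of_ne_zero hk0)), ← mul_assoc]
        gcongr
        exact hpow k hk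
    _ ≤ ‖s‖ * 2 ^ |s.re + 1| * B * ∑' k : ℕ, (k : ℝ) ^ (-1 - ε) := by
        rw [← Finset.mul_sum]
        gcongr
        exact hsum.sum_le_tsum _ fun k _ ↦ by positivity
    _ = _ := by ring

theorem exists_continuousOn_norm_zetaRemainder_le {ε : ℝ} (hε : 0 < ε) :
    ∃ c : ℂ → ℝ, ContinuousOn c {1}ᶜ ∧ ∀ s ≠ 1, ∀ m ≠ 0,
      ‖zetaRemainder m s‖ ≤ c s * (m : ℝ) ^ (ε - s.re) := by
  let d : ℂ → ℝ := fun s ↦ ‖s‖ * 2 ^ |s.re + 1| * ∑' k : ℕ, (k : ℝ) ^ (-1 - ε)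
  have hd : Continuous d := (continuous_norm.mul
    (Continuous.rpow continuous_const (by fun_prop) (by simp))).mul continuous_const
  refine ⟨fun s ↦ ‖zetaRemainder 1 s‖ + d s, ?_, fun s hs m hm ↦ ?_⟩
  · exact ContinuousOn.add (fun s hs ↦ (differentiableAt_zetaRemainder one_ne_zero
      hs).continuousAt.norm.continuousWithinAt) hd.continuousOn
  have hm1 : 1 ≤ m := Nat.one_le_iff_ne_zero.2 hm
  have hm0 : (0 : ℝ) < m := mod_cast hm1
  rcases le_or_gt s.re ε with hσ | hσ
  · have hdiff := norm_zetaRemainder_sub_le hε (by positivity) one_ne_zero hm1 hs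
      (B := (m : ℝ) ^ (ε - s.re)) fun k hk ↦ Real.rpow_le_rpow (by positivity)
        (Nat.cast_le.2 (Finset.mem_Ico.1 hk).2.le) (sub_nonneg.2 hσ)
    calc ‖zetaRemainder m s‖
        ≤ ‖zetaRemainder 1 s‖ + ‖zetaRemainder 1 s - zetaRemainder m s‖ := by
          simpa using norm_sub_le (zetaRemainder 1 s) (zetaRemainder 1 s - zetaRemainder m s)
      _ ≤ ‖zetaRemainder 1 s‖ * (m : ℝ) ^ (ε - s.re) + d s * (m : ℝ) ^ (ε - s.re) := by
          gcongr
          exact le_mul_of_one_le_right (norm_nonneg _)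
            (Real.one_le_rpow (mod_cast hm1) (sub_nonneg.2 hσ))
      _ = _ := by ring
  · have hlim : Tendsto (fun M ↦ ‖zetaRemainder m s - zetaRemainder M s‖) atTop
        (𝓝 ‖zetaRemainder m s‖) := by
      simpa using ((tendsto_zetaRemainder (hε.trans hσ) hs).const_sub (zetaRemainder m s)).norm
    calc ‖zetaRemainder m s‖ ≤ d s * (m : ℝ) ^ (ε - s.re) := by
          refine le_of_tendsto hlim ?_
          filter_upwards [eventually_ge_atTop m] with M hM
          exact norm_zetaRemainder_sub_le hε (by positivity) hm hM hs fun k hk ↦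
            Real.rpow_le_rpow_of_nonpos hm0 (Nat.cast_le.2 (Finset.mem_Ico.1 hk).1)
              (by linarith)
      _ ≤ _ := by gcongr; exact le_add_of_nonneg_left (norm_nonneg _)

end ZetaRemainder

section ApproximateFormula

open Set Topology

theorem exists_norm_le_and_norm_sub_le_of_differentiableOn {E : Type*} [NormedAddCommGroup E]
    [NormedSpace ℂ E] [CompleteSpace E] {f : ℂ → E} {U K : Set ℂ} (hf : DifferentiableOn ℂ f U)
    (hU : IsOpen U) (hK : IsCompact K) (hKc : Convex ℝ K) (hKU : K ⊆ U) :
    ∃ L : ℝ, 0 ≤ L ∧ (∀ z ∈ K, ‖f z‖ ≤ L) ∧ ∀ z ∈ K, ∀ w ∈ K, ‖f z - f w‖ ≤ L * ‖z - w‖ := by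
  obtain ⟨C, hC⟩ := hK.exists_bound_of_continuousOn (hf.continuousOn.mono hKU)
  obtain ⟨C', hC'⟩ := hK.exists_bound_of_continuousOn ((hf.deriv hU).continuousOn.mono hKU)
  refine ⟨max 0 (max C C'), le_max_left _ _, fun z hz ↦ (hC z hz).trans (by simp),
    fun z hz w hw ↦ ?_⟩
  exact hKc.norm_image_sub_le_of_norm_deriv_le
    (fun x hx ↦ hf.differentiableAt (hU.mem_nhds (hKU hx)))
    (fun x hx ↦ (hC' x hx).trans (by simp)) hw hz

theorem exp_neg_ne_one_of_norm_lt_two_pi {w : ℂ} (hw : ‖w‖ < 2 * π) (h0 : w ≠ 0) :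
    cexp (-w) ≠ 1 := by
  intro h
  obtain ⟨n, hn⟩ := Complex.exp_eq_one_iff.1 h
  have hn0 : n ≠ 0 := by
    rintro rfl
    exact h0 (by simpa using hn)
  have hnorm : ‖w‖ = |(n : ℝ)| * (2 * π) := by
    rw [← norm_neg, hn]
    simp [abs_of_pos pi_pos]
  have hn1 : (1 : ℝ) ≤ |(n : ℝ)| := mod_cast Int.one_le_abs hn0
  nlinarith [pi_pos]

theorem exists_one_sub_exp_neg_mul_inv_add_eq_one {r : ℝ} (hr : r < 2 * π) :
    ∃ (ψ : ℂ → ℂ) (L : ℝ), 0 ≤ L ∧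
      (∀ w, ‖w‖ ≤ r → w ≠ 0 → (1 - cexp (-w)) * (w⁻¹ + ψ w) = 1) ∧
      (∀ w, ‖w‖ ≤ r → ‖ψ w‖ ≤ L) ∧
      ∀ w w', ‖w‖ ≤ r → ‖w'‖ ≤ r → ‖ψ w - ψ w'‖ ≤ L * ‖w - w'‖ := by
  let U : Set ℂ := Metric.ball 0 (2 * π)
  have hU : U ∈ 𝓝 0 := Metric.ball_mem_nhds _ Real.two_pi_pos
  let φ : ℂ → ℂ := dslope (fun w ↦ 1 - cexp (-w)) 0
  have hφ : DifferentiableOn ℂ φ U := (differentiableOn_dslope hU).2 (by fun_prop)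
  have hφ_zero : φ 0 = 1 := by
    have : HasDerivAt (fun w ↦ 1 - cexp (-w)) (-(cexp (-0) * (-1))) (0 : ℂ) :=
      ((hasDerivAt_neg (0 : ℂ)).cexp).const_sub 1
    simp [φ, this.deriv]
  have hφ_of_ne {w : ℂ} (hw : w ≠ 0) : φ w = (1 - cexp (-w)) / w := by
    simp [φ, dslope_of_ne _ hw, slope_def_field]
  have hexp {w : ℂ} (hw : w ∈ U) (h0 : w ≠ 0) : 1 - cexp (-w) ≠ 0 :=
    sub_ne_zero.2 (exp_neg_ne_one_of_norm_lt_two_pi (by simpa [U] using hw) h0).symm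
  have hφ_ne : ∀ w ∈ U, φ w ≠ 0 := by
    intro w hw
    rcases eq_or_ne w 0 with rfl | h0
    · simp [hφ_zero]
    · rw [hφ_of_ne h0]
      exact div_ne_zero (hexp hw h0) h0
  let ψ : ℂ → ℂ := dslope (fun w ↦ (φ w)⁻¹) 0
  have hψ : DifferentiableOn ℂ ψ U := (differentiableOn_dslope hU).2 (hφ.inv hφ_ne)
  obtain ⟨L, hL, hbound, hlip⟩ := exists_norm_le_and_norm_sub_le_of_differentiableOn hψ
    Metric.isOpen_ball (isCompact_closedBall 0 r) (convex_closedBall 0 r)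
    (Metric.closedBall_subset_ball hr)
  simp only [mem_closedBall_zero_iff] at hbound hlip
  refine ⟨ψ, L, hL, fun w hw h0 ↦ ?_, hbound, fun w w' hw hw' ↦ hlip w hw w' hw'⟩
  have := hexp (by simpa [U] using hw.trans_lt hr) h0
  simp only [ψ, dslope_of_ne _ h0, slope_def_field, hφ_zero, hφ_of_ne h0]
  field_simp
  ring

theorem norm_sum_Ico_sub_succ_mul_le {R : Type*} [SeminormedRing R] {e γ : ℕ → R} {m M : ℕ}
    (hmM : m ≤ M) {B : ℝ} (he : ∀ k ∈ Finset.Icc m M, ‖e k‖ ≤ B) :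
    ‖∑ k ∈ Finset.Ico m M, (e k - e (k + 1)) * γ k‖ ≤
      B * (‖γ m‖ + ‖γ M‖ + ∑ k ∈ Finset.Ico m M, ‖γ (k + 1) - γ k‖) := by
  have hparts : ∑ k ∈ Finset.Ico m M, (e k - e (k + 1)) * γ k =
      e m * γ m - e M * γ M + ∑ k ∈ Finset.Ico m M, e (k + 1) * (γ (k + 1) - γ k) := by
    rw [← sub_eq_iff_eq_add, ← Finset.sum_sub_distrib, ← neg_sub (e M * γ M),
      ← Finset.sum_Ico_sub (fun k ↦ e k * γ k) hmM, ← Finset.sum_neg_distrib]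
    refine Finset.sum_congr rfl fun k _ ↦ ?_
    noncomm_ring
  have hmul {k : ℕ} (hk : k ∈ Finset.Icc m M) (x : R) : ‖e k * x‖ ≤ B * ‖x‖ :=
    norm_mul_le_of_le (he k hk) le_rfl
  rw [hparts, mul_add, mul_add, Finset.mul_sum]
  refine norm_add_le_of_le (norm_sub_le_of_le (hmul (by grind) _) (hmul (by grind) _)) ?_
  exact norm_sum_le_of_le _ fun k hk ↦ hmul (by grind) _

/-- The spacing `log (n + 1) - log n` of the frequencies of the Dirichlet series `∑ n^{-s}`. -/
noncomputable def logStep (n : ℕ) : ℝ := Real.log (1 + (n : ℝ)⁻¹)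

theorem logStep_pos {n : ℕ} (hn : n ≠ 0) : 0 < logStep n :=
  Real.log_pos (lt_add_of_pos_right 1 (by positivity))

theorem logStep_le_inv (n : ℕ) : logStep n ≤ (n : ℝ)⁻¹ := by
  simpa [logStep] using Real.log_le_sub_one_of_pos (show 0 < 1 + (n : ℝ)⁻¹ by positivity)

theorem logStep_succ_le {n : ℕ} (hn : n ≠ 0) : logStep (n + 1) ≤ logStep n := by
  rw [logStep, logStep]
  gcongr
  exact n.le_succ

theorem exp_neg_logStep {n : ℕ} (hn : n ≠ 0) : cexp (-logStep n) = n / (n + 1) := by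
  have hn' : (n : ℂ) ≠ 0 := Nat.cast_ne_zero.2 hn
  rw [Complex.exp_neg, ← ofReal_exp, logStep, Real.exp_log (by positivity)]
  push_cast
  field_simp

theorem natCast_succ_cpow_neg {n : ℕ} (hn : n ≠ 0) (s : ℂ) :
    ((n + 1 : ℕ) : ℂ) ^ (-s) = (n : ℂ) ^ (-s) * cexp (-(s * logStep n)) := by
  have hsucc : ((n + 1 : ℕ) : ℂ) = ((n : ℝ) : ℂ) * ((1 + (n : ℝ)⁻¹ : ℝ) : ℂ) := by
    push_cast
    field_simp
  have hpos : (0 : ℝ) < 1 + (n : ℝ)⁻¹ := by positivity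
  rw [hsucc, mul_cpow_ofReal_nonneg n.cast_nonneg hpos.le, ofReal_natCast,
    cpow_def_of_ne_zero (ofReal_ne_zero.2 hpos.ne'), ← ofReal_log hpos.le, logStep]
  congr 2
  ring

theorem zetaRemainder_sub_succ_eq_mul {n : ℕ} (hn : n ≠ 0) {s a b : ℂ} (h0 : s ≠ 0) (h1 : s ≠ 1)
    (ha : (1 - cexp (-(s * logStep n))) * ((s * logStep n)⁻¹ + a) = 1)
    (hb : (1 - cexp (-logStep n)) * ((logStep n : ℂ)⁻¹ + b) = 1) :
    zetaRemainder n s - zetaRemainder (n + 1) s =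
      ((n : ℂ) ^ (-s) - ((n + 1 : ℕ) : ℂ) ^ (-s)) * ((s * a - b) / (s - 1) - 1) := by
  have hn' : (n : ℂ) ≠ 0 := Nat.cast_ne_zero.2 hn
  have hn1 : (n : ℂ) + 1 ≠ 0 := n.cast_add_one_ne_zero
  have hℓ : (logStep n : ℂ) ≠ 0 := ofReal_ne_zero.2 (logStep_pos hn).ne'
  have hs1 : s - 1 ≠ 0 := sub_ne_zero.2 h1
  have hb' : b = n + 1 - (logStep n : ℂ)⁻¹ := by
    rw [exp_neg_logStep hn, one_sub_div hn1, add_sub_cancel_left] at hb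
    field_simp at hb ⊢
    linear_combination hb
  have hcpow {k : ℕ} (hk : k ≠ 0) : (k : ℂ) ^ (1 - s) = k * (k : ℂ) ^ (-s) := by
    rw [sub_eq_add_neg, cpow_add _ _ (Nat.cast_ne_zero.2 hk), cpow_one]
  rw [zetaRemainder_sub_succ, hcpow hn, hcpow n.succ_ne_zero, natCast_succ_cpow_neg hn, hb']
  set x := cexp (-(s * logStep n))
  push_cast
  field_simp at ha ⊢
  linear_combination -(n : ℂ) ^ (-s) * ha

theorem norm_mul_sub_div_sub_one_sub_le {s a a' b b' : ℂ} {L δ : ℝ} (ha : ‖a' - a‖ ≤ L * (‖s‖ * δ))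
    (hb : ‖b' - b‖ ≤ L * δ) :
    ‖((s * a' - b') / (s - 1) - 1) - ((s * a - b) / (s - 1) - 1)‖ ≤
      L * (‖s‖ ^ 2 + 1) / ‖s - 1‖ * δ := by
  rw [sub_sub_sub_cancel_right, ← sub_div, norm_div,
    show s * a' - b' - (s * a - b) = s * (a' - a) - (b' - b) by ring]
  calc ‖s * (a' - a) - (b' - b)‖ / ‖s - 1‖
      ≤ (‖s‖ * (L * (‖s‖ * δ)) + L * δ) / ‖s - 1‖ := by
        gcongr
        exact norm_sub_le_of_le (norm_mul_le_of_le le_rfl ha) hb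
    _ = _ := by ring

theorem norm_mul_sub_div_sub_one_le {s a b : ℂ} {L : ℝ} (hs : s ≠ 1) (ha : ‖a‖ ≤ L)
    (hb : ‖b‖ ≤ L) :
    ‖(s * a - b) / (s - 1) - 1‖ ≤ (L + 1) * ((‖s‖ + 1) / ‖s - 1‖) := by
  have hpos : 0 < ‖s - 1‖ := norm_pos_iff.2 (sub_ne_zero.2 hs)
  have hone : 1 ≤ (‖s‖ + 1) / ‖s - 1‖ := by
    rw [one_le_div hpos]
    simpa using norm_sub_le s 1
  calc ‖(s * a - b) / (s - 1) - 1‖ ≤ (‖s‖ * L + L) / ‖s - 1‖ + 1 := by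
        refine norm_sub_le_of_le ?_ norm_one.le
        rw [norm_div]
        gcongr
        exact norm_sub_le_of_le (norm_mul_le_of_le le_rfl ha) hb
    _ ≤ L * ((‖s‖ + 1) / ‖s - 1‖) + (‖s‖ + 1) / ‖s - 1‖ :=
        add_le_add (by ring_nf; rfl) hone
    _ = _ := by ring

theorem sum_Ico_logStep_sub_le {m M : ℕ} (hM : M ≠ 0) (hmM : m ≤ M) :
    ∑ k ∈ Finset.Ico m M, (logStep k - logStep (k + 1)) ≤ (m : ℝ)⁻¹ := by
  have htel : ∑ k ∈ Finset.Ico m M, (logStep k - logStep (k + 1)) = logStep m - logStep M := by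
    rw [← neg_sub (logStep M), ← Finset.sum_Ico_sub logStep hmM, ← Finset.sum_neg_distrib]
    simp only [neg_sub]
  linarith [logStep_pos hM, logStep_le_inv m]

theorem norm_mul_logStep_le {r : ℝ} {s : ℂ} {m k : ℕ} (hm : m ≠ 0) (hmk : m ≤ k)
    (hs : ‖s‖ ≤ r * m) : ‖s * logStep k‖ ≤ r := by
  rw [norm_mul, norm_real, Real.norm_of_nonneg (logStep_pos (by lia)).le]
  calc ‖s‖ * logStep k ≤ r * m * (m : ℝ)⁻¹ := by
        refine mul_le_mul hs ((logStep_le_inv k).trans ?_) (logStep_pos (by lia)).le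
          ((norm_nonneg s).trans hs)
        have : (0 : ℝ) < m := by positivity
        gcongr
    _ = r := mul_inv_cancel_right₀ (Nat.cast_ne_zero.2 hm) r

theorem exists_zetaRemainder_sub_succ_eq_mul {r : ℝ} (h1r : 1 ≤ r) (hr : r < 2 * π) :
    ∃ L : ℝ, 0 ≤ L ∧ ∀ (s : ℂ) (m : ℕ), s ≠ 0 → s ≠ 1 → m ≠ 0 → ‖s‖ ≤ r * m →
      ∃ γ : ℕ → ℂ, ∀ k, m ≤ k →
        zetaRemainder k s - zetaRemainder (k + 1) s =
          ((k : ℂ) ^ (-s) - ((k + 1 : ℕ) : ℂ) ^ (-s)) * γ k ∧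
        ‖γ k‖ ≤ (L + 1) * ((‖s‖ + 1) / ‖s - 1‖) ∧
        ‖γ (k + 1) - γ k‖ ≤
          L * (‖s‖ ^ 2 + 1) / ‖s - 1‖ * (logStep k - logStep (k + 1)) := by
  obtain ⟨ψ, L, hL, hψ, hbound, hlip⟩ := exists_one_sub_exp_neg_mul_inv_add_eq_one hr
  refine ⟨L, hL, fun s m hs0 hs1 hm hsm ↦
    ⟨fun k ↦ (s * ψ (s * logStep k) - ψ (logStep k)) / (s - 1) - 1, fun k hk ↦ ?_⟩⟩
  have hsℓ {k : ℕ} (hk : m ≤ k) : ‖s * logStep k‖ ≤ r := norm_mul_logStep_le hm hk hsm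
  have hℓ {k : ℕ} (hk : m ≤ k) : ‖(logStep k : ℂ)‖ ≤ r := by
    have hm1 : (1 : ℝ) ≤ m := mod_cast Nat.one_le_iff_ne_zero.2 hm
    have h1 : ‖(1 : ℂ)‖ ≤ r * m := by simpa using one_le_mul_of_one_le_of_one_le h1r hm1
    simpa using norm_mul_logStep_le hm hk h1
  have hne : (logStep k : ℂ) ≠ 0 := ofReal_ne_zero.2 (logStep_pos (by lia)).ne'
  refine ⟨?_, ?_, ?_⟩
  · exact zetaRemainder_sub_succ_eq_mul (by lia) hs0 hs1
      (hψ _ (hsℓ hk) (mul_ne_zero hs0 hne)) (hψ _ (hℓ hk) hne)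
  · exact norm_mul_sub_div_sub_one_le hs1 (hbound _ (hsℓ hk)) (hbound _ (hℓ hk))
  · have hδ : ‖(logStep (k + 1) : ℂ) - logStep k‖ = logStep k - logStep (k + 1) := by
      rw [← ofReal_sub, norm_real, norm_sub_rev,
        Real.norm_of_nonneg (sub_nonneg.2 (logStep_succ_le (by lia)))]
    rw [← hδ]
    refine norm_mul_sub_div_sub_one_sub_le ?_ (hlip _ _ (hℓ (by lia)) (hℓ hk))
    rw [← norm_mul, mul_sub]
    exact hlip _ _ (hsℓ (by lia)) (hsℓ hk)

theorem exists_norm_zetaRemainder_sub_le {r : ℝ} (h1r : 1 ≤ r) (hr : r < 2 * π) :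
    ∃ C : ℝ, ∀ s : ℂ, 0 < s.re → s ≠ 1 → ∀ m M : ℕ, m ≠ 0 → m ≤ M → ‖s‖ ≤ r * m →
      ‖zetaRemainder m s - zetaRemainder M s‖ ≤
        C * ((‖s‖ + 1) / ‖s - 1‖) * (m : ℝ) ^ (-s.re) := by
  obtain ⟨L, hL, hfactor⟩ := exists_zetaRemainder_sub_succ_eq_mul h1r hr
  refine ⟨2 * (L + 1) + L * r, fun s hσ hs m M hm hmM hsm ↦ ?_⟩
  obtain ⟨γ, hγ⟩ := hfactor s m (by rintro rfl; simp at hσ) hs hm hsm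
  have hm1 : (1 : ℝ) ≤ m := mod_cast Nat.one_le_iff_ne_zero.2 hm
  have hcpow : ∀ k ∈ Finset.Icc m M, ‖(k : ℂ) ^ (-s)‖ ≤ (m : ℝ) ^ (-s.re) := by
    intro k hk
    have hk := (Finset.mem_Icc.1 hk).1
    rw [norm_natCast_cpow_of_pos (by lia), neg_re]
    exact Real.rpow_le_rpow_of_nonpos (by linarith) (mod_cast hk) (by linarith)
  have hvar : ∑ k ∈ Finset.Ico m M, ‖γ (k + 1) - γ k‖ ≤ L * r * ((‖s‖ + 1) / ‖s - 1‖) :=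
    calc ∑ k ∈ Finset.Ico m M, ‖γ (k + 1) - γ k‖
        ≤ L * (‖s‖ ^ 2 + 1) / ‖s - 1‖ *
            ∑ k ∈ Finset.Ico m M, (logStep k - logStep (k + 1)) := by
          rw [Finset.mul_sum]
          exact Finset.sum_le_sum fun k hk ↦ (hγ k (Finset.mem_Ico.1 hk).1).2.2
      _ ≤ L * (‖s‖ ^ 2 + 1) / ‖s - 1‖ * (m : ℝ)⁻¹ := by
          gcongr
          exact sum_Ico_logStep_sub_le (by lia) hmM
      _ = L / ‖s - 1‖ * (‖s‖ * (‖s‖ / m) + (m : ℝ)⁻¹) := by ring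
      _ ≤ L / ‖s - 1‖ * (‖s‖ * r + r) := by
          gcongr
          · exact (div_le_iff₀ (by linarith)).2 hsm
          · exact (inv_le_one_of_one_le₀ hm1).trans h1r
      _ = L * r * ((‖s‖ + 1) / ‖s - 1‖) := by ring
  rw [zetaRemainder_eq_add_sum_Ico s hmM, add_sub_cancel_left,
    Finset.sum_congr rfl fun k hk ↦ (hγ k (Finset.mem_Ico.1 hk).1).1]
  refine (norm_sum_Ico_sub_succ_mul_le (e := fun k ↦ (k : ℂ) ^ (-s)) hmM hcpow).trans ?_
  rw [mul_comm]
  gcongr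
  linarith [(hγ m le_rfl).2.1, (hγ M hmM).2.1]

/-- In the range `‖s‖ ≤ r m` with `r < 2 * π`, the sum over `n > m` has no stationary phase. -/
theorem exists_norm_zetaRemainder_le {r : ℝ} (h1r : 1 ≤ r) (hr : r < 2 * π) :
    ∃ C : ℝ, ∀ s : ℂ, 0 < s.re → s ≠ 1 → ∀ m : ℕ, m ≠ 0 → ‖s‖ ≤ r * m →
      ‖zetaRemainder m s‖ ≤ C * ((‖s‖ + 1) / ‖s - 1‖) * (m : ℝ) ^ (-s.re) := by
  obtain ⟨C, hC⟩ := exists_norm_zetaRemainder_sub_le h1r hr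
  refine ⟨C, fun s hσ hs m hm hsm ↦ ?_⟩
  have hlim : Tendsto (fun M ↦ ‖zetaRemainder m s - zetaRemainder M s‖) atTop
      (𝓝 ‖zetaRemainder m s‖) := by
    simpa using ((tendsto_zetaRemainder hσ hs).const_sub (zetaRemainder m s)).norm
  refine le_of_tendsto hlim ?_
  filter_upwards [eventually_ge_atTop m] with M hM
  exact hC s hσ hs m M hm hM hsm

end ApproximateFormula

section DoubleZeta

open Set Topology

theorem not_zeta2Sing {s₁ s₂ : ℂ} (h : 1 < (s₁ + s₂).re) (hs₂ : s₂ ≠ 1) (hne : s₁ + s₂ ≠ 2) :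
    ¬ zeta2Sing (s₁, s₂) := by
  rintro (h' | h' | h' | ⟨k, h'⟩)
  · exact hs₂ h'
  · exact hne h'
  · simp only [h', one_re, lt_irrefl] at h
  · simp only [h', mul_re, neg_re, re_ofNat, natCast_re, neg_im, im_ofNat, natCast_im] at h
    linarith [k.cast_nonneg (α := ℝ)]

theorem exists_continuousOn_norm_cpow_mul_zetaRemainder_le {ε : ℝ} (hε : 0 < ε) :
    ∃ c : ℂ → ℝ, ContinuousOn c {1}ᶜ ∧ ∀ s₁ s₂ : ℂ, s₂ ≠ 1 → ∀ m : ℕ, m ≠ 0 →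
      ‖(m : ℂ) ^ (-s₁) * zetaRemainder m s₂‖ ≤ c s₂ * (m : ℝ) ^ (ε - (s₁ + s₂).re) := by
  obtain ⟨c, hc, hbound⟩ := exists_continuousOn_norm_zetaRemainder_le hε
  refine ⟨c, hc, fun s₁ s₂ hs₂ m hm ↦ ?_⟩
  have hm0 : (0 : ℝ) < m := by positivity
  calc ‖(m : ℂ) ^ (-s₁) * zetaRemainder m s₂‖
      ≤ (m : ℝ) ^ (-s₁.re) * (c s₂ * (m : ℝ) ^ (ε - s₂.re)) := by
        rw [norm_mul, norm_natCast_cpow_of_pos (by lia), neg_re]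
        gcongr
        exact hbound s₂ hs₂ m hm
    _ = c s₂ * (m : ℝ) ^ (ε - (s₁ + s₂).re) := by
        rw [mul_left_comm, ← Real.rpow_add hm0, add_re]
        ring_nf

theorem exists_norm_cpow_mul_zetaRemainder_le {ε : ℝ} (hε : 0 < ε) {s₂ : ℂ} (hs₂ : s₂ ≠ 1) :
    ∃ C : ℝ, ∀ s₁ : ℂ, ∀ m : ℕ, m ≠ 0 →
      ‖(m : ℂ) ^ (-s₁) * zetaRemainder m s₂‖ ≤ C * (m : ℝ) ^ (ε - (s₁ + s₂).re) := by
  obtain ⟨c, -, hbound⟩ := exists_continuousOn_norm_cpow_mul_zetaRemainder_le hε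
  exact ⟨c s₂, fun s₁ m hm ↦ hbound s₁ s₂ hs₂ m hm⟩

theorem summable_cpow_mul_zetaRemainder {s₁ s₂ : ℂ} (h : 1 < (s₁ + s₂).re) (hs₂ : s₂ ≠ 1) :
    Summable fun m : ℕ ↦ ((m + 1 : ℕ) : ℂ) ^ (-s₁) * zetaRemainder (m + 1) s₂ := by
  obtain ⟨C, hC⟩ :=
    exists_norm_cpow_mul_zetaRemainder_le (show 0 < ((s₁ + s₂).re - 1) / 2 by linarith) hs₂
  exact .of_norm_bounded
    (((summable_nat_add_iff 1).2 (Real.summable_nat_rpow.2 (by linarith))).mul_left C)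
    fun m ↦ hC s₁ (m + 1) m.succ_ne_zero

/-- The continuation of the double zeta function `∑_{m < n} m^{-s₁} n^{-s₂}` to `1 < Re (s₁ + s₂)`,
obtained by replacing the inner sum over `n > m` with its integral plus `zetaRemainder m s₂`. -/
noncomputable def doubleZeta (s₁ s₂ : ℂ) : ℂ :=
  riemannZeta (s₁ + s₂ - 1) / (s₂ - 1) +
    ∑' m : ℕ, ((m + 1 : ℕ) : ℂ) ^ (-s₁) * zetaRemainder (m + 1) s₂

theorem natCast_cpow_mul_zetaTail {m : ℕ} (hm : m ≠ 0) (s₁ s₂ : ℂ) :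
    (m : ℂ) ^ (-s₁) * zetaTail m s₂ =
      (m : ℂ) ^ (-(s₁ + s₂ - 1)) / (s₂ - 1) + (m : ℂ) ^ (-s₁) * zetaRemainder m s₂ := by
  rw [zetaRemainder, mul_sub, mul_div_assoc', ← cpow_add _ _ (Nat.cast_ne_zero.2 hm),
    show -s₁ + (1 - s₂) = -(s₁ + s₂ - 1) by ring]
  ring

theorem hasSum_doubleZeta {s₁ s₂ : ℂ} (h : 2 < (s₁ + s₂).re) (hs₂ : s₂ ≠ 1) :
    HasSum (fun m : ℕ ↦ ((m + 1 : ℕ) : ℂ) ^ (-s₁) * zetaTail (m + 1) s₂) (doubleZeta s₁ s₂) := by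
  have hzeta : HasSum (fun m : ℕ ↦ ((m + 1 : ℕ) : ℂ) ^ (-(s₁ + s₂ - 1)))
      (riemannZeta (s₁ + s₂ - 1)) := by
    simpa [zetaTail] using hasSum_zetaTail 0 (s := s₁ + s₂ - 1)
      (by rw [sub_re, one_re]; linarith)
  simp_rw [natCast_cpow_mul_zetaTail (Nat.succ_ne_zero _)]
  exact (hzeta.div_const _).add (summable_cpow_mul_zetaRemainder (by linarith) hs₂).hasSum

theorem tsum_tsum_cpow_eq_doubleZeta {s₁ s₂ : ℂ} (h₂ : 1 < s₂.re) (h : 2 < s₁.re + s₂.re) :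
    ∑' m : ℕ, ((m : ℂ) + 1) ^ (-s₁) * ∑' n : ℕ, (((m : ℂ) + 1) + ((n : ℂ) + 1)) ^ (-s₂) =
      doubleZeta s₁ s₂ := by
  rw [← (hasSum_doubleZeta h (by rintro rfl; simp at h₂)).tsum_eq]
  refine tsum_congr fun m ↦ ?_
  rw [← (hasSum_zetaTail (m + 1) h₂).tsum_eq]
  push_cast
  simp only [add_comm, add_left_comm]

theorem differentiableOn_tsum_cpow_mul_zetaRemainder (s₁ : ℂ) :
    DifferentiableOn ℂ
      (fun s₂ ↦ ∑' m : ℕ, ((m + 1 : ℕ) : ℂ) ^ (-s₁) * zetaRemainder (m + 1) s₂)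
      ({s₂ | 1 - s₁.re < s₂.re} \ {1}) := by
  have hopen : IsOpen ({s₂ : ℂ | 1 - s₁.re < s₂.re} \ {1}) :=
    (isOpen_lt continuous_const continuous_re).sdiff isClosed_singleton
  refine differentiableOn_tsum_of_eventually_norm_le hopen
    (fun m s₂ hs₂ ↦ ((differentiableAt_zetaRemainder m.succ_ne_zero hs₂.2).const_mul
      _).differentiableWithinAt) fun z hz ↦ ?_
  have hzre : 1 - s₁.re < z.re := hz.1
  set ε := (s₁.re + z.re - 1) / 3 with hε
  have hε0 : 0 < ε := by linarith
  obtain ⟨c, hc, hbound⟩ := exists_continuousOn_norm_cpow_mul_zetaRemainder_le hε0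
  have hcz : ContinuousAt c z := hc.continuousAt (isOpen_compl_singleton.mem_nhds hz.2)
  refine ⟨fun m ↦ (|c z| + 1) * ((m + 1 : ℕ) : ℝ) ^ (-1 - ε), ((summable_nat_add_iff 1).2
    (Real.summable_nat_rpow.2 (by linarith))).mul_left _, ?_⟩
  filter_upwards [hopen.mem_nhds hz, hcz.eventually (gt_mem_nhds (by linarith [le_abs_self (c z)] :
      c z < |c z| + 1)), continuous_re.continuousAt.eventually
      (lt_mem_nhds (by linarith : z.re - ε < z.re))] with w hwU hwc hwre m
  refine (hbound s₁ w hwU.2 (m + 1) m.succ_ne_zero).trans ?_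
  rw [add_re]
  refine mul_le_mul (by linarith) (Real.rpow_le_rpow_of_exponent_le (by simp) (by linarith))
    (by positivity) (by positivity)

theorem differentiableOn_doubleZeta (s₁ : ℂ) :
    DifferentiableOn ℂ (doubleZeta s₁) ({s₂ | 1 - s₁.re < s₂.re} \ {1, 2 - s₁}) := by
  refine .add (fun s₂ hs₂ ↦ ?_) ((differentiableOn_tsum_cpow_mul_zetaRemainder s₁).mono
    (sdiff_subset_sdiff_right (by simp)))
  obtain ⟨h1, h2⟩ : s₂ ≠ 1 ∧ s₂ ≠ 2 - s₁ := by simpa using hs₂.2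
  have hzeta : DifferentiableAt ℂ riemannZeta (s₁ + s₂ - 1) :=
    differentiableAt_riemannZeta fun h ↦ h2 (by linear_combination h)
  exact ((hzeta.comp s₂ (f := fun s₂ ↦ s₁ + s₂ - 1) (by fun_prop)).div
    (differentiableAt_id.sub_const 1) (sub_ne_zero.2 h1)).differentiableWithinAt

theorem eq_doubleZeta {Z : ℂ → ℂ → ℂ}
    (hZa : AnalyticOnNhd ℂ (fun p : ℂ × ℂ ↦ Z p.1 p.2) {p | ¬ zeta2Sing p})
    (hZs : ∀ s₁ s₂ : ℂ, 1 < s₂.re → 2 < s₁.re + s₂.re →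
      Z s₁ s₂ = ∑' m : ℕ, ((m : ℂ) + 1) ^ (-s₁)
        * ∑' n : ℕ, (((m : ℂ) + 1) + ((n : ℂ) + 1)) ^ (-s₂))
    {s₁ s₂ : ℂ} (h : 1 < (s₁ + s₂).re) (hs₂ : s₂ ≠ 1) (hne : s₁ + s₂ ≠ 2) :
    Z s₁ s₂ = doubleZeta s₁ s₂ := by
  set U : Set ℂ := {w | 1 - s₁.re < w.re} \ {1, 2 - s₁} with hU
  have hopen : IsOpen U :=
    (isOpen_lt continuous_const continuous_re).sdiff (toFinite _).isClosed
  have hmem {w : ℂ} : w ∈ U ↔ 1 < (s₁ + w).re ∧ w ≠ 1 ∧ s₁ + w ≠ 2 := by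
    simp [hU, eq_sub_iff_add_eq', sub_lt_iff_lt_add']
  have hZ : DifferentiableOn ℂ (Z s₁) U := fun w hw ↦ by
    obtain ⟨h1, h2, h3⟩ := hmem.1 hw
    exact ((hZa (s₁, w) (not_zeta2Sing h1 h2 h3)).differentiableAt.comp w
      (f := fun w ↦ (s₁, w)) (by fun_prop)).differentiableWithinAt
  set x : ℝ := |s₁.re| + 3
  have hx : 1 < x ∧ 2 < s₁.re + x := by
    constructor <;> linarith [abs_nonneg s₁.re, neg_abs_le s₁.re]
  have hxU : (x : ℂ) ∈ U := by
    refine hmem.2 ⟨by simpa using by linarith, fun h ↦ ?_, fun h ↦ ?_⟩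
    · linarith [ofReal_eq_one.1 h]
    · linarith [show s₁.re + x = 2 by simpa using congrArg re h]
  refine (hZ.analyticOnNhd hopen).eqOn_of_preconnected_of_eventuallyEq
    ((differentiableOn_doubleZeta s₁).analyticOnNhd hopen)
    (isPreconnected_halfSpace_re_gt_diff_countable _ (toFinite _).countable) hxU ?_
    (hmem.2 ⟨h, hs₂, hne⟩)
  filter_upwards [continuous_re.continuousAt.eventually (lt_mem_nhds (by simpa using hx.1)),
    continuous_re.continuousAt.eventually (lt_mem_nhds (by
      simpa using by linarith : 2 - s₁.re < (x : ℂ).re))] with w hw1 hw2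
  exact (hZs s₁ w hw1 (by linarith)).trans (tsum_tsum_cpow_eq_doubleZeta hw1 (by linarith))

theorem doubleZeta_sub_sum {s₁ s₂ : ℂ} (h : 1 < (s₁ + s₂).re) (hs₂ : s₂ ≠ 1) (K : ℕ) :
    doubleZeta s₁ s₂ - ∑ m ∈ Finset.Icc 1 K, (m : ℂ) ^ (-s₁) * zetaTail m s₂ =
      zetaTail K (s₁ + s₂ - 1) / (s₂ - 1) +
        ∑' m : ℕ, ((m + K + 1 : ℕ) : ℂ) ^ (-s₁) * zetaRemainder (m + K + 1) s₂ := by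
  have hshift (f : ℕ → ℂ) : ∑ m ∈ Finset.Icc 1 K, f m = ∑ m ∈ Finset.range K, f (m + 1) := by
    rw [Finset.range_eq_Ico, Finset.sum_Ico_add' f 0 K 1, zero_add, Finset.Ico_add_one_right_eq_Icc]
  have hsplit := (summable_cpow_mul_zetaRemainder h hs₂).sum_add_tsum_nat_add K
  rw [doubleZeta, ← hsplit, zetaTail, hshift, hshift, sub_div, Finset.sum_div,
    Finset.sum_congr rfl fun m _ ↦ natCast_cpow_mul_zetaTail m.succ_ne_zero s₁ s₂,
    Finset.sum_add_distrib]
  ring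

theorem exists_norm_tsum_cpow_mul_zetaRemainder_le {s₂ : ℂ} (hs₂ : s₂ ≠ 1) {σ η : ℝ}
    (hη : 0 ≤ η) (hησ : η < σ - 1) :
    ∃ C : ℝ, ∀ s₁ : ℂ, (s₁ + s₂).re = σ → ∀ K : ℕ, K ≠ 0 →
      ‖∑' m : ℕ, ((m + K + 1 : ℕ) : ℂ) ^ (-s₁) * zetaRemainder (m + K + 1) s₂‖ ≤
        C * (K : ℝ) ^ (-η) := by
  set ε := (σ - 1 - η) / 2 with hε
  have hε0 : 0 < ε := by linarith
  obtain ⟨C, hC⟩ := exists_norm_cpow_mul_zetaRemainder_le hε0 hs₂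
  have hsum : Summable fun m : ℕ ↦ (m : ℝ) ^ (-1 - ε) := Real.summable_nat_rpow.2 (by linarith)
  refine ⟨|C| * ∑' m : ℕ, (m : ℝ) ^ (-1 - ε), fun s₁ hσ K hK ↦ ?_⟩
  have hterm (m : ℕ) : ‖((m + K + 1 : ℕ) : ℂ) ^ (-s₁) * zetaRemainder (m + K + 1) s₂‖ ≤
      |C| * (K : ℝ) ^ (-η) * ((m + (K + 1) : ℕ) : ℝ) ^ (-1 - ε) := by
    calc ‖((m + K + 1 : ℕ) : ℂ) ^ (-s₁) * zetaRemainder (m + K + 1) s₂‖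
        ≤ |C| * ((m + (K + 1) : ℕ) : ℝ) ^ (-η + (-1 - ε)) := by
          refine (hC s₁ (m + K + 1) (by lia)).trans ?_
          rw [hσ, show ε - σ = -η + (-1 - ε) by linarith, add_assoc]
          gcongr
          exact le_abs_self C
      _ ≤ |C| * ((K : ℝ) ^ (-η) * ((m + (K + 1) : ℕ) : ℝ) ^ (-1 - ε)) := by
          rw [Real.rpow_add (by positivity)]
          gcongr ?_ * (?_ * ?_)
          exact Real.rpow_le_rpow_of_nonpos (by positivity) (mod_cast by lia) (by linarith)
      _ = _ := by ring
  calc _ ≤ |C| * (K : ℝ) ^ (-η) * ∑' m : ℕ, ((m + (K + 1) : ℕ) : ℝ) ^ (-1 - ε) :=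
        tsum_of_norm_bounded (((summable_nat_add_iff (K + 1)).2 hsum).hasSum.mul_left _) hterm
    _ ≤ |C| * (K : ℝ) ^ (-η) * ∑' m : ℕ, (m : ℝ) ^ (-1 - ε) :=
        mul_le_mul_of_nonneg_left (tsum_comp_le_tsum_of_inj hsum (fun m ↦ by positivity)
          (add_left_injective (K + 1))) (by positivity)
    _ = _ := by ring

theorem exists_norm_zetaTail_le {σ r A : ℝ} (hσ : 0 < σ) (h1r : 1 ≤ r) (hr : r < 2 * π) :
    ∃ C : ℝ, ∀ s : ℂ, s.re = σ → ∀ K : ℕ, K ≠ 0 → ‖s‖ ≤ r * K → K ≤ A * ‖s - 1‖ →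
      ‖zetaTail K s‖ ≤ C * (K : ℝ) ^ (-σ) := by
  obtain ⟨C, hC⟩ := exists_norm_zetaRemainder_le h1r hr
  refine ⟨A + |C| * (1 + 2 * A), fun s hsσ K hK hs hsA ↦ ?_⟩
  have hK1 : (1 : ℝ) ≤ K := mod_cast Nat.one_le_iff_ne_zero.2 hK
  have hs1 : s ≠ 1 := by
    rintro rfl
    rw [sub_self, norm_zero, mul_zero] at hsA
    linarith
  have hpos : 0 < ‖s - 1‖ := norm_pos_iff.2 (sub_ne_zero.2 hs1)
  have hint : ‖(K : ℂ) ^ (1 - s) / (s - 1)‖ ≤ A * (K : ℝ) ^ (-σ) := by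
    rw [norm_div, norm_natCast_cpow_of_pos (by lia), sub_re, one_re, hsσ, sub_eq_add_neg,
      Real.rpow_add (by linarith), Real.rpow_one, div_le_iff₀ hpos]
    calc (K : ℝ) * (K : ℝ) ^ (-σ) ≤ A * ‖s - 1‖ * (K : ℝ) ^ (-σ) := by gcongr
      _ = _ := by ring
  have hratio : (‖s‖ + 1) / ‖s - 1‖ ≤ 1 + 2 * A := by
    rw [div_le_iff₀ hpos]
    linarith [norm_le_norm_sub_add s 1, norm_one (α := ℂ)]
  calc ‖zetaTail K s‖ = ‖(K : ℂ) ^ (1 - s) / (s - 1) + zetaRemainder K s‖ := by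
        rw [zetaRemainder, add_sub_cancel]
    _ ≤ A * (K : ℝ) ^ (-σ) + |C| * (1 + 2 * A) * (K : ℝ) ^ (-σ) := by
        refine norm_add_le_of_le hint ((hC s (hsσ ▸ hσ) hs1 K hK hs).trans ?_)
        rw [hsσ]
        gcongr
        exact le_abs_self C
    _ = _ := by ring

theorem exists_norm_doubleZeta_sub_sum_le {s₂ : ℂ} (hs₂ : s₂ ≠ 1) {σ η r A : ℝ} (hη : 0 ≤ η)
    (hησ : η < σ - 1) (h1r : 1 ≤ r) (hr : r < 2 * π) :
    ∃ C : ℝ, ∀ s₁ : ℂ, (s₁ + s₂).re = σ → ∀ K : ℕ, K ≠ 0 →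
      ‖s₁ + s₂ - 1‖ ≤ r * K → K ≤ A * ‖s₁ + s₂ - 2‖ →
        ‖doubleZeta s₁ s₂ - ∑ m ∈ Finset.Icc 1 K, (m : ℂ) ^ (-s₁) * zetaTail m s₂‖ ≤
          C * (K : ℝ) ^ (-η) := by
  obtain ⟨C₁, hC₁⟩ := exists_norm_zetaTail_le (A := A) (hη.trans_lt hησ) h1r hr
  obtain ⟨C₂, hC₂⟩ := exists_norm_tsum_cpow_mul_zetaRemainder_le hs₂ hη hησ
  refine ⟨|C₁| / ‖s₂ - 1‖ + C₂, fun s₁ hσ K hK hsr hsA ↦ ?_⟩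
  have hK1 : (1 : ℝ) ≤ K := mod_cast Nat.one_le_iff_ne_zero.2 hK
  rw [doubleZeta_sub_sum (by linarith) hs₂, add_mul, div_mul_eq_mul_div]
  refine norm_add_le_of_le ?_ (hC₂ s₁ hσ K hK)
  rw [norm_div]
  gcongr
  refine (hC₁ (s₁ + s₂ - 1) (by rw [sub_re, one_re, hσ]) K hK hsr
    (by rwa [sub_sub, one_add_one_eq_two])).trans ?_
  gcongr
  exact le_abs_self C₁

theorem norm_sq_cpow_mul_zetaTail_sub_isBigO {ε : ℝ} (hε : 0 < ε) (hε1 : ε ≤ 1) (s₁ : ℂ) {s₂ : ℂ}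
    (hs₂ : s₂ ≠ 1) :
    (fun m : ℕ ↦ ‖(m : ℂ) ^ (-s₁) * zetaTail m s₂‖ ^ 2 -
        (‖s₂ - 1‖ ^ 2)⁻¹ * (m : ℝ) ^ (2 - 2 * (s₁ + s₂).re)) =O[atTop]
      fun m ↦ (m : ℝ) ^ (1 - 2 * (s₁ + s₂).re + ε) := by
  obtain ⟨C, hC⟩ := exists_norm_cpow_mul_zetaRemainder_le hε hs₂
  set σ := (s₁ + s₂).re
  refine .of_bound (|C| ^ 2 + 2 * |C| * ‖s₂ - 1‖⁻¹) ?_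
  filter_upwards [eventually_ne_atTop 0] with m hm
  have hm0 : (0 : ℝ) < m := by positivity
  have hm1 : (1 : ℝ) ≤ m := mod_cast Nat.one_le_iff_ne_zero.2 hm
  set w := (m : ℂ) ^ (-(s₁ + s₂ - 1)) / (s₂ - 1)
  set R := (m : ℂ) ^ (-s₁) * zetaRemainder m s₂
  have hw : ‖w‖ = ‖s₂ - 1‖⁻¹ * (m : ℝ) ^ (1 - σ) := by
    rw [norm_div, norm_natCast_cpow_of_pos (by lia), neg_re, sub_re, one_re, neg_sub,
      div_eq_inv_mul]
  have hR : ‖R‖ ≤ |C| * (m : ℝ) ^ (ε - σ) :=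
    (hC s₁ m hm).trans (by gcongr; exact le_abs_self C)
  have hmain : (‖s₂ - 1‖ ^ 2)⁻¹ * (m : ℝ) ^ (2 - 2 * σ) = ‖w‖ ^ 2 := by
    rw [hw, mul_pow, inv_pow, ← Real.rpow_mul_natCast hm0.le]
    push_cast
    ring_nf
  rw [natCast_cpow_mul_zetaTail hm, hmain, Real.norm_eq_abs,
    Real.norm_of_nonneg (Real.rpow_nonneg hm0.le _)]
  calc |‖w + R‖ ^ 2 - ‖w‖ ^ 2| ≤ ‖R‖ ^ 2 + 2 * ‖R‖ * ‖w‖ := by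
        simpa using abs_norm_sq_sub_norm_sq_le_add (w + R) w
    _ ≤ (|C| * (m : ℝ) ^ (ε - σ)) ^ 2 + 2 * (|C| * (m : ℝ) ^ (ε - σ)) * ‖w‖ := by gcongr
    _ = |C| ^ 2 * (m : ℝ) ^ (2 * ε - 2 * σ) +
          2 * |C| * ‖s₂ - 1‖⁻¹ * (m : ℝ) ^ (1 - 2 * σ + ε) := by
        rw [hw, mul_pow, ← Real.rpow_mul_natCast hm0.le,
          show 1 - 2 * σ + ε = (ε - σ) + (1 - σ) by ring, Real.rpow_add hm0]
        push_cast
        ring_nf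
    _ ≤ |C| ^ 2 * (m : ℝ) ^ (1 - 2 * σ + ε) +
          2 * |C| * ‖s₂ - 1‖⁻¹ * (m : ℝ) ^ (1 - 2 * σ + ε) := by
        gcongr
        linarith
    _ = _ := by ring

theorem eventually_norm_add_mul_I_le_and_le (w : ℂ) :
    ∀ᶠ T : ℝ in atTop, ∀ t ∈ Icc T (2 * T),
      ‖w + t * I‖ ≤ 3 * ⌈T⌉₊ ∧ (⌈T⌉₊ : ℝ) ≤ 4 * ‖w + t * I‖ := by
  filter_upwards [eventually_ge_atTop (2 * ‖w‖ + 1)] with T hT t ⟨hTt, htT⟩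
  have hw := norm_nonneg w
  have ht : ‖(t * I : ℂ)‖ = t := by
    rw [norm_mul, norm_I, mul_one, norm_real, Real.norm_of_nonneg (by linarith)]
  have hupper := norm_add_le w (t * I)
  have hlower := norm_sub_le (w + t * I) w
  rw [add_sub_cancel_left] at hlower
  constructor <;> linarith [Nat.le_ceil T, Nat.ceil_lt_add_one (show 0 ≤ T by linarith)]

theorem exists_eventually_norm_doubleZeta_sub_sum_le {s₁ s₂ : ℂ} (hs₂ : s₂ ≠ 1) {η : ℝ}
    (hη : 0 ≤ η) (hησ : η < (s₁ + s₂).re - 1) :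
    ∃ C : ℝ, ∀ᶠ T : ℝ in atTop, ∀ t ∈ Icc T (2 * T),
      ‖doubleZeta (s₁ + t * I) s₂ -
        ∑ m ∈ Finset.Icc 1 ⌈T⌉₊, (m : ℂ) ^ (-s₁) * zetaTail m s₂ * (m : ℂ) ^ (-(t * I))‖ ≤
          C * T ^ (-η) := by
  obtain ⟨C, hC⟩ := exists_norm_doubleZeta_sub_sum_le (r := 3) (A := 4) hs₂ hη hησ (by norm_num)
    (by linarith [pi_gt_three])
  refine ⟨|C|, ?_⟩
  filter_upwards [eventually_gt_atTop 0, eventually_norm_add_mul_I_le_and_le (s₁ + s₂ - 1),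
    eventually_norm_add_mul_I_le_and_le (s₁ + s₂ - 2)] with T hT hupper hlower t ht
  have hcpow : ∀ m ∈ Finset.Icc 1 ⌈T⌉₊, (m : ℂ) ^ (-s₁) * zetaTail m s₂ * (m : ℂ) ^ (-(t * I)) =
      (m : ℂ) ^ (-(s₁ + t * I)) * zetaTail m s₂ := fun m hm ↦ by
    rw [neg_add, cpow_add _ _ (Nat.cast_ne_zero.2 (by grind)), mul_right_comm]
  rw [Finset.sum_congr rfl hcpow]
  refine (hC (s₁ + t * I) (by simp) ⌈T⌉₊ (Nat.ceil_pos.2 hT).ne' ?_ ?_).trans ?_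
  · rw [show s₁ + t * I + s₂ - 1 = s₁ + s₂ - 1 + t * I by ring]
    exact (hupper t ht).1
  · rw [show s₁ + t * I + s₂ - 2 = s₁ + s₂ - 2 + t * I by ring]
    exact (hlower t ht).2
  · gcongr ?_ * ?_
    · exact le_abs_self C
    · exact Real.rpow_le_rpow_of_nonpos hT (Nat.le_ceil T) (by linarith)

end DoubleZeta

/-- Mean square of ζ₂ in t₁ on the line σ₁ + σ₂ = 3/2 (from Theorem 1.1). -/
theorem stmt16 (Z : ℂ → ℂ → ℂ)
    (hZa : AnalyticOnNhd ℂ (fun p : ℂ × ℂ => Z p.1 p.2) {p | ¬ zeta2Sing p})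
    (hZs : ∀ s₁ s₂ : ℂ, 1 < s₂.re → 2 < s₁.re + s₂.re →
      Z s₁ s₂ = ∑' m : ℕ, ((m : ℂ) + 1) ^ (-s₁)
        * ∑' n : ℕ, (((m : ℂ) + 1) + ((n : ℂ) + 1)) ^ (-s₂))
    (σ₁ : ℝ) (s₂ : ℂ) (h : σ₁ + s₂.re = 3/2)
    (hsing : ∀ t₁ : ℝ, 2 ≤ t₁ → ¬ zeta2Sing (((σ₁ : ℂ) + t₁ * Complex.I), s₂)) :
    (fun T : ℝ => (∫ t in (2:ℝ)..T, ‖Z ((σ₁ : ℂ) + t * Complex.I) s₂‖ ^ 2)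
        - (‖s₂ - 1‖ ^ 2)⁻¹ * T * Real.log T)
      =O[atTop] (fun T : ℝ => T) := by
  have hs₂ : s₂ ≠ 1 := fun h1 ↦ hsing 2 le_rfl (.inl h1)
  have hre : ((σ₁ : ℂ) + s₂).re = 3 / 2 := by simpa using h
  have hcont : ContinuousOn (fun t : ℝ ↦ Z (σ₁ + t * I) s₂) (Set.Ici 2) := fun t ht ↦
    ((hZa _ (hsing t ht)).continuousAt.comp (f := fun t : ℝ ↦ ((σ₁ : ℂ) + t * I, s₂))
      (by fun_prop)).continuousWithinAt
  have hcoeff : (fun n : ℕ ↦ ‖(n : ℂ) ^ (-(σ₁ : ℂ)) * zetaTail n s₂‖ ^ 2 -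
      (‖s₂ - 1‖ ^ 2)⁻¹ / n) =O[atTop] fun n ↦ (n : ℝ) ^ (-1 - 1 / 2 : ℝ) := by
    convert norm_sq_cpow_mul_zetaTail_sub_isBigO one_half_pos one_half_lt_one.le σ₁ hs₂ using 5
      <;> rw [hre] <;> norm_num [Real.rpow_neg_one, div_eq_mul_inv]
  have hZ (t : ℝ) : Z (σ₁ + t * I) s₂ = doubleZeta (σ₁ + t * I) s₂ := by
    have hret : ((σ₁ : ℂ) + t * I + s₂).re = 3 / 2 := by simpa using h
    refine eq_doubleZeta hZa hZs (by linarith) hs₂ fun h2 ↦ ?_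
    norm_num [h2] at hret
  obtain ⟨C, happrox⟩ := exists_eventually_norm_doubleZeta_sub_sum_le (s₁ := σ₁) hs₂
    (show 0 ≤ (1 / 4 : ℝ) by norm_num) (by linarith)
  simp_rw [← hZ] at happrox
  exact integral_norm_sq_sub_mul_log_isBigO (by norm_num) hcont one_half_pos hcoeff happrox
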